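/- arXiv:1811.11899 — 7 statements merged into one kernel-verified Lean document; each statement's English description precedes it below -/
import Mathlib

section
/- Let p ∈ (0,1) and let F be a Lévy measure on ℝⁿ satisfying (A_F). Then for every π ∈ C₀ the function u ↦ p⁻¹((1+⟨π,u⟩)₊)^p − p⁻¹ − ⟨π,u⟩·1_{|u|≤1} is F-integrable, so that I(π) := ∫ ( p⁻¹((1+⟨π,u⟩)₊)^p − p⁻¹ − ⟨π,u⟩·1_{|u|≤1} ) F(du) is finite; moreover the map π ↦ I(π) is continuous on C₀ (with the subspace topology of ℝⁿ). -/
open MeasureTheory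
open scoped RealInnerProductSpace ENNReal


lemma aux_scalar (p : ℝ) (hp0 : 0 < p) (hp1 : p < 1) (x : ℝ) :
    |p⁻¹ * (max (1 + x) 0) ^ p - p⁻¹ - x| ≤ 2 * p⁻¹ * x ^ 2 := by
  have hpi : 1 < p⁻¹ := (one_lt_inv₀ hp0).2 hp1
  have hpp : p⁻¹ * p = 1 := inv_mul_cancel₀ hp0.ne'
  rcases le_or_gt x (-1) with h | h
  · rw [max_eq_right (by linarith), Real.zero_rpow hp0.ne']
    have h2 : 1 ≤ x ^ 2 := by nlinarith
    rw [abs_le]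
    constructor <;> nlinarith
  · rw [max_eq_left (by linarith)]
    have h1 : (1 + x) ^ p ≤ 1 + p * x :=
      rpow_one_add_le_one_add_mul_self h.le hp0.le hp1.le
    have h2 : (1 + x) ^ (1 - p) ≤ 1 + (1 - p) * x :=
      rpow_one_add_le_one_add_mul_self h.le (by linarith) (by linarith)
    have hy : 0 < (1 + x) ^ p := Real.rpow_pos_of_pos (by linarith) p
    have h3 : (1 + x) ^ p * (1 + x) ^ (1 - p) = 1 + x := by
      rw [← Real.rpow_add (by linarith)]
      simp
    set a := (1 + x) ^ p
    set D := 1 + (1 - p) * x with hD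
    have hDp : p ≤ D := by nlinarith
    have h4 : 1 + x ≤ a * D := by
      rw [← h3]; exact mul_le_mul_of_nonneg_left h2 hy.le
    have h5 : 1 + p * x - a ≤ x ^ 2 := by
      have : (1 + p * x - a) * D ≤ p * (1 - p) * x ^ 2 := by
        rw [sub_mul]; rw [hD] at h4 ⊢; nlinarith
      have h6 : p * (1 - p) * x ^ 2 ≤ x ^ 2 * D := by
        nlinarith [mul_le_mul_of_nonneg_left hDp (sq_nonneg x), mul_nonneg (mul_nonneg hp0.le hp0.le) (sq_nonneg x)]
      exact le_of_mul_le_mul_right (this.trans h6) (by linarith)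
    have e : p⁻¹ * a - p⁻¹ - x = - (p⁻¹ * (1 + p * x - a)) := by
      linear_combination x * hpp
    rw [e, abs_neg, abs_of_nonneg (mul_nonneg (by linarith) (by linarith))]
    have := mul_le_mul_of_nonneg_left h5 (by linarith : 0 ≤ p⁻¹)
    nlinarith [mul_nonneg (by linarith : 0 ≤ p⁻¹) (sq_nonneg x)]

lemma aux_bound {n : ℕ} (p : ℝ) (hp0 : 0 < p) (hp1 : p < 1) (R : ℝ)
    (π u : EuclideanSpace ℝ (Fin n)) (hπ : ‖π‖ ≤ R) :
    ‖p⁻¹ * (max (1 + ⟪π, u⟫) 0) ^ p - p⁻¹ -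
          Set.indicator {u : EuclideanSpace ℝ (Fin n) | ‖u‖ ≤ 1}
            (fun u => ⟪π, u⟫) u‖ ≤
      2 * p⁻¹ * R ^ 2 * min (‖u‖ ^ (2 : ℕ)) 1 +
        Set.indicator {u : EuclideanSpace ℝ (Fin n) | 1 < ‖u‖}
          (fun u => p⁻¹ * (1 + (1 + R) ^ p) * ‖u‖ ^ p) u := by
  have hpi : 0 < p⁻¹ := inv_pos.2 hp0
  have hin : |⟪π, u⟫| ≤ R * ‖u‖ :=
    (abs_real_inner_le_norm π u).trans (mul_le_mul_of_nonneg_right hπ (norm_nonneg _))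
  have hR : 0 ≤ R := (norm_nonneg _).trans hπ
  rw [Real.norm_eq_abs]
  by_cases hu : ‖u‖ ≤ 1
  · rw [Set.indicator_of_mem (by exact hu), Set.indicator_of_notMem (by simpa using hu)]
    rw [min_eq_left (by nlinarith [norm_nonneg u])]
    refine (aux_scalar p hp0 hp1 _).trans ?_
    have : ⟪π, u⟫ ^ 2 ≤ (R * ‖u‖) ^ 2 := by
      rw [← sq_abs]; gcongr
    have := mul_le_mul_of_nonneg_left this (by positivity : 0 ≤ 2 * p⁻¹)
    linarith
  · have hu' : 1 < ‖u‖ := not_le.1 hu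
    rw [Set.indicator_of_notMem (by exact hu), Set.indicator_of_mem (by exact hu')]
    have h1 : (max (1 + ⟪π, u⟫) 0) ^ p ≤ (1 + R) ^ p * ‖u‖ ^ p := by
      rw [← Real.mul_rpow (by linarith) (norm_nonneg _)]
      refine Real.rpow_le_rpow (le_max_right _ _) (max_le ?_ (by positivity)) hp0.le
      nlinarith [le_abs_self ⟪π, u⟫]
    have h0 : 0 ≤ (max (1 + ⟪π, u⟫) 0) ^ p := Real.rpow_nonneg (le_max_right _ _) _
    have h2 : 1 ≤ ‖u‖ ^ p := Real.one_le_rpow hu'.le hp0.le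
    have h3 : 0 ≤ 2 * p⁻¹ * R ^ 2 * min (‖u‖ ^ (2 : ℕ)) 1 := by positivity
    have h4 := mul_le_mul_of_nonneg_left h1 hpi.le
    have h5 := mul_le_mul_of_nonneg_left h2 hpi.le
    have h6 := mul_nonneg hpi.le h0
    have h7 := mul_nonneg hpi.le (h0.trans h1)
    rw [abs_le]
    constructor <;> nlinarith

/-- Let `p ∈ (0,1)` and let `F` be a Lévy measure on `ℝⁿ` satisfying `(A_F)`.
Then for every `π ∈ C₀` the function
`u ↦ p⁻¹((1+⟨π,u⟩)₊)^p − p⁻¹ − ⟨π,u⟩·1_{|u|≤1}` is `F`-integrable, and the map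
`π ↦ I(π) := ∫ (p⁻¹((1+⟨π,u⟩)₊)^p − p⁻¹ − ⟨π,u⟩·1_{|u|≤1}) dF` is continuous on `C₀`. -/
theorem integrand_integrable_and_I_continuousOn
    (n : ℕ) (hn : 1 ≤ n) (p : ℝ) (hp0 : 0 < p) (hp1 : p < 1)
    (F : Measure (EuclideanSpace ℝ (Fin n)))
    (hF0 : F {(0 : EuclideanSpace ℝ (Fin n))} = 0)
    (hFlevy : ∫⁻ u, ENNReal.ofReal (min (‖u‖ ^ (2 : ℕ)) 1) ∂F ≠ ⊤)
    (hAF : ∫⁻ u in {u : EuclideanSpace ℝ (Fin n) | 1 < ‖u‖}, ENNReal.ofReal (‖u‖ ^ p) ∂F ≠ ⊤) :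
    (∀ π ∈ {π : EuclideanSpace ℝ (Fin n) |
        F {u : EuclideanSpace ℝ (Fin n) | 1 + ⟪π, u⟫ < 0} = 0},
      Integrable (fun u : EuclideanSpace ℝ (Fin n) =>
        p⁻¹ * (max (1 + ⟪π, u⟫) 0) ^ p - p⁻¹ -
          Set.indicator {u : EuclideanSpace ℝ (Fin n) | ‖u‖ ≤ 1}
            (fun u => ⟪π, u⟫) u) F) ∧
    ContinuousOn
      (fun π : EuclideanSpace ℝ (Fin n) =>
        ∫ u, (p⁻¹ * (max (1 + ⟪π, u⟫) 0) ^ p - p⁻¹ -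
          Set.indicator {u : EuclideanSpace ℝ (Fin n) | ‖u‖ ≤ 1}
            (fun u => ⟪π, u⟫) u) ∂F)
      {π : EuclideanSpace ℝ (Fin n) |
        F {u : EuclideanSpace ℝ (Fin n) | 1 + ⟪π, u⟫ < 0} = 0} := by
  have hmeas : MeasurableSet {u : EuclideanSpace ℝ (Fin n) | 1 < ‖u‖} :=
    measurableSet_lt measurable_const measurable_norm
  have hmeas' : MeasurableSet {u : EuclideanSpace ℝ (Fin n) | ‖u‖ ≤ 1} :=
    measurableSet_le measurable_norm measurable_const
  have hi1 : Integrable (fun u : EuclideanSpace ℝ (Fin n) => min (‖u‖ ^ (2 : ℕ)) 1) F := by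
    refine (lintegral_ofReal_ne_top_iff_integrable ?_ ?_).1 hFlevy
    · exact (by fun_prop : Measurable _).aestronglyMeasurable
    · exact Filter.Eventually.of_forall fun u => by positivity
  have hi2 : IntegrableOn (fun u : EuclideanSpace ℝ (Fin n) => ‖u‖ ^ p)
      {u : EuclideanSpace ℝ (Fin n) | 1 < ‖u‖} F := by
    refine (lintegral_ofReal_ne_top_iff_integrable ?_ ?_).1 hAF
    · exact (by fun_prop : Measurable _).aestronglyMeasurable
    · exact Filter.Eventually.of_forall fun u => by positivity
  have hb : ∀ R : ℝ, Integrable (fun u : EuclideanSpace ℝ (Fin n) =>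
      2 * p⁻¹ * R ^ 2 * min (‖u‖ ^ (2 : ℕ)) 1 +
        Set.indicator {u : EuclideanSpace ℝ (Fin n) | 1 < ‖u‖}
          (fun u => p⁻¹ * (1 + (1 + R) ^ p) * ‖u‖ ^ p) u) F := fun R =>
    (hi1.const_mul _).add ((integrable_indicator_iff hmeas).2 (hi2.const_mul _))
  have hm : ∀ π : EuclideanSpace ℝ (Fin n), AEStronglyMeasurable
      (fun u : EuclideanSpace ℝ (Fin n) =>
        p⁻¹ * (max (1 + ⟪π, u⟫) 0) ^ p - p⁻¹ -
          Set.indicator {u : EuclideanSpace ℝ (Fin n) | ‖u‖ ≤ 1}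
            (fun u => ⟪π, u⟫) u) F := by
    intro π
    have h1 : Measurable (fun u : EuclideanSpace ℝ (Fin n) => (⟪π, u⟫ : ℝ)) := by fun_prop
    exact (((((measurable_const.add h1).max measurable_const).pow_const p).const_mul _).sub_const
      _ |>.sub (h1.indicator hmeas')).aestronglyMeasurable
  refine ⟨fun π _ => ?_, ?_⟩
  · exact (hb ‖π‖).mono' (hm π)
      (Filter.Eventually.of_forall fun u => aux_bound p hp0 hp1 ‖π‖ π u le_rfl)
  · refine continuousOn_of_forall_continuousAt fun π₀ _ => ?_
    refine continuousAt_of_dominated (Filter.Eventually.of_forall hm) ?_ (hb (‖π₀‖ + 1)) ?_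
    · filter_upwards [Metric.ball_mem_nhds π₀ one_pos] with π hπ
      refine Filter.Eventually.of_forall fun u => aux_bound p hp0 hp1 _ π u ?_
      have := norm_le_norm_add_norm_sub' π π₀
      rw [Metric.mem_ball, dist_eq_norm] at hπ
      linarith
    · refine Filter.Eventually.of_forall fun u => Continuous.continuousAt ?_
      have h1 : Continuous (fun π : EuclideanSpace ℝ (Fin n) => (⟪π, u⟫ : ℝ)) := by fun_prop
      refine (Continuous.sub (continuous_const.mul (((continuous_const.add h1).max
        continuous_const).rpow_const fun _ => Or.inr hp0.le)) continuous_const).sub ?_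
      by_cases hu : ‖u‖ ≤ 1
      · simpa [Set.indicator, hu] using h1
      · simpa [Set.indicator, hu] using continuous_const
end

section
/- Let p < 0 and let F be a Lévy measure on ℝⁿ. Let π ∈ ℝⁿ be such that there exists ε > 0 with F({u ∈ ℝⁿ : 1 + ⟨π,u⟩ < ε}) = 0 (in particular this holds for π = λπ₀ whenever π₀ ∈ C₀ and λ ∈ [0,1), with ε = 1 − λ). Then the integrals I₁(π) := ∫_{|u|≤1} ( p⁻¹(1+⟨π,u⟩)^p − p⁻¹ − ⟨π,u⟩ ) F(du) and I₂(π) := ∫_{|u|>1} ( p⁻¹(1+⟨π,u⟩)^p − p⁻¹ ) F(du) converge absolutely, so I₁(π) and I₂(π) are finite real numbers. -/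
open MeasureTheory
open scoped RealInnerProductSpace ENNReal

theorem aux_deriv_bound (p ε : ℝ) (hp : p < 0) (hε : 0 < ε) (y : ℝ) (hy : ε ≤ y) (h1 : ε ≤ 1) :
    |y ^ (p - 1) - 1| ≤ (1 - p) * ε ^ (p - 2) * |y - 1| := by
  have h := (convex_Ici ε).norm_image_sub_le_of_norm_hasDerivWithin_le
    (f := fun y : ℝ => y ^ (p - 1)) (f' := fun y : ℝ => (p - 1) * y ^ (p - 1 - 1))
    (C := (1 - p) * ε ^ (p - 2)) (x := 1) (y := y) ?_ ?_ h1 hy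
  · simpa using h
  · intro x hx
    have hx0 : 0 < x := lt_of_lt_of_le hε hx
    exact (Real.hasDerivAt_rpow_const (Or.inl hx0.ne')).hasDerivWithinAt
  · intro x hx
    have hx0 : 0 < x := lt_of_lt_of_le hε hx
    have e : p - 1 - 1 = p - 2 := by ring
    rw [e, Real.norm_eq_abs, abs_mul, abs_of_neg (by linarith : p - 1 < 0),
      abs_of_pos (Real.rpow_pos_of_pos hx0 _), neg_sub]
    exact mul_le_mul_of_nonneg_left
      (Real.rpow_le_rpow_of_nonpos hε hx (by linarith)) (by linarith)

theorem aux_taylor (p ε : ℝ) (hp : p < 0) (hε : 0 < ε) (h1 : ε ≤ 1) (y : ℝ) (hy : ε ≤ y) :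
    |p⁻¹ * y ^ p - p⁻¹ - (y - 1)| ≤ (1 - p) * ε ^ (p - 2) * (y - 1) ^ 2 := by
  have hK : 0 ≤ (1 - p) * ε ^ (p - 2) :=
    mul_nonneg (by linarith) (Real.rpow_nonneg hε.le _)
  have hsub : ∀ x ∈ Set.uIcc 1 y, ε ≤ x := fun x hx => le_trans (le_min h1 hy) hx.1
  have h := (convex_uIcc (1 : ℝ) y).norm_image_sub_le_of_norm_hasDerivWithin_le
    (f := fun y : ℝ => p⁻¹ * y ^ p - p⁻¹ - (y - 1)) (f' := fun y : ℝ => y ^ (p - 1) - 1)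
    (C := (1 - p) * ε ^ (p - 2) * |y - 1|) (x := 1) (y := y) ?_ ?_
    Set.left_mem_uIcc Set.right_mem_uIcc
  · have e : (1 - p) * ε ^ (p - 2) * (y - 1) ^ 2
        = (1 - p) * ε ^ (p - 2) * |y - 1| * |y - 1| := by
      rw [← sq_abs]; ring
    rw [e]
    simpa using h
  · intro x hx
    have hx0 : 0 < x := lt_of_lt_of_le hε (hsub x hx)
    have d := (((Real.hasDerivAt_rpow_const (p := p) (Or.inl hx0.ne')).const_mul p⁻¹).sub_const
      p⁻¹).sub ((hasDerivAt_id x).sub_const 1)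
    have e : p⁻¹ * (p * x ^ (p - 1)) - 1 = x ^ (p - 1) - 1 := by
      rw [inv_mul_cancel_left₀ hp.ne]
    rw [e] at d
    exact d.hasDerivWithinAt
  · intro x hx
    refine (aux_deriv_bound p ε hp hε x (hsub x hx) h1).trans ?_
    exact mul_le_mul_of_nonneg_left (Set.abs_sub_left_of_mem_uIcc hx) hK

/-- Let `p < 0` and let `F` be a Lévy measure on `ℝⁿ`. Let `π ∈ ℝⁿ` be such
that there exists `ε > 0` with `F {u | 1 + ⟨π,u⟩ < ε} = 0`. Then
`I₁(π) := ∫_{|u|≤1} (p⁻¹(1+⟨π,u⟩)^p − p⁻¹ − ⟨π,u⟩) dF` and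
`I₂(π) := ∫_{|u|>1} (p⁻¹(1+⟨π,u⟩)^p − p⁻¹) dF` converge absolutely,
i.e. the integrands are integrable on the respective regions. -/
theorem I1_I2_converge_absolutely
    (n : ℕ) (hn : 1 ≤ n) (p : ℝ) (hp : p < 0)
    (F : Measure (EuclideanSpace ℝ (Fin n)))
    (hF0 : F {(0 : EuclideanSpace ℝ (Fin n))} = 0)
    (hFlevy : ∫⁻ u, ENNReal.ofReal (min (‖u‖ ^ (2 : ℕ)) 1) ∂F ≠ ⊤)
    (π : EuclideanSpace ℝ (Fin n)) (ε : ℝ) (hε : 0 < ε)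
    (hπ : F {u : EuclideanSpace ℝ (Fin n) | 1 + ⟪π, u⟫ < ε} = 0) :
    IntegrableOn
      (fun u : EuclideanSpace ℝ (Fin n) => p⁻¹ * (1 + ⟪π, u⟫) ^ p - p⁻¹ - ⟪π, u⟫)
      {u : EuclideanSpace ℝ (Fin n) | ‖u‖ ≤ 1} F ∧
    IntegrableOn
      (fun u : EuclideanSpace ℝ (Fin n) => p⁻¹ * (1 + ⟪π, u⟫) ^ p - p⁻¹)
      {u : EuclideanSpace ℝ (Fin n) | 1 < ‖u‖} F := by
  wlog h1 : ε ≤ 1 generalizing ε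
  · refine this (min ε 1) (lt_min hε one_pos) (measure_mono_null ?_ hπ) (min_le_right _ _)
    intro u hu
    have hu' : 1 + ⟪π, u⟫ < min ε 1 := hu
    exact lt_of_lt_of_le hu' (min_le_left _ _)
  have hint : Integrable (fun u : EuclideanSpace ℝ (Fin n) => min (‖u‖ ^ (2 : ℕ)) 1) F := by
    refine ⟨by fun_prop, ?_⟩
    rw [hasFiniteIntegral_iff_ofReal (Filter.Eventually.of_forall fun u => by positivity)]
    exact hFlevy.lt_top
  have hae : ∀ᵐ u ∂F, ε ≤ 1 + ⟪π, u⟫ := by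
    rw [ae_iff]
    simpa using hπ
  have hinner : Measurable (fun u : EuclideanSpace ℝ (Fin n) => ⟪π, u⟫) := by fun_prop
  have hm : Measurable (fun u : EuclideanSpace ℝ (Fin n) => p⁻¹ * (1 + ⟪π, u⟫) ^ p - p⁻¹) :=
    (((hinner.const_add 1).pow_const p).const_mul _).sub_const _
  constructor
  · refine Integrable.mono' ((hint.const_mul ((1 - p) * ε ^ (p - 2) * ‖π‖ ^ 2)).integrableOn)
      (hm.sub hinner).aestronglyMeasurable ?_
    have hs : MeasurableSet {u : EuclideanSpace ℝ (Fin n) | ‖u‖ ≤ 1} :=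
      measurableSet_le measurable_norm measurable_const
    filter_upwards [ae_restrict_of_ae hae, ae_restrict_mem hs] with u hu hu1
    have hu1' : ‖u‖ ≤ 1 := hu1
    have hK : 0 ≤ (1 - p) * ε ^ (p - 2) :=
      mul_nonneg (by linarith) (Real.rpow_nonneg hε.le _)
    have ht := aux_taylor p ε hp hε h1 _ hu
    rw [add_sub_cancel_left] at ht
    rw [min_eq_left (pow_le_one₀ (norm_nonneg u) hu1'), Real.norm_eq_abs]
    refine ht.trans ?_
    rw [mul_assoc _ (‖π‖ ^ 2)]
    refine mul_le_mul_of_nonneg_left ?_ hK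
    rw [← mul_pow, ← sq_abs]
    exact pow_le_pow_left₀ (abs_nonneg _) (abs_real_inner_le_norm π u) 2
  · refine Integrable.mono' ((hint.const_mul (|p⁻¹| * ε ^ p + |p⁻¹|)).integrableOn)
      hm.aestronglyMeasurable ?_
    have hs : MeasurableSet {u : EuclideanSpace ℝ (Fin n) | 1 < ‖u‖} :=
      measurableSet_lt measurable_const measurable_norm
    filter_upwards [ae_restrict_of_ae hae, ae_restrict_mem hs] with u hu hu1
    have hu1' : 1 < ‖u‖ := hu1
    rw [min_eq_right (one_le_pow₀ hu1'.le), Real.norm_eq_abs, mul_one]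
    refine (abs_sub _ _).trans ?_
    rw [abs_mul, abs_of_pos (Real.rpow_pos_of_pos (lt_of_lt_of_le hε hu) p)]
    gcongr ?_ + _
    exact mul_le_mul_of_nonneg_left (Real.rpow_le_rpow_of_nonpos hε hu hp.le) (abs_nonneg _)
end

section
/- Let p ∈ (0,1), let F be a Lévy measure on ℝⁿ satisfying (A_F), let b ∈ ℝⁿ and let c be a symmetric positive semidefinite n×n real matrix. Then ψ is a closed proper convex function on ℝⁿ: ψ is convex, lower semicontinuous, ψ(π) > −∞ for all π, and ψ(0) = 0 (so ψ is finite somewhere). -/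
open MeasureTheory
open scoped RealInnerProductSpace ENNReal Topology

/-- The extended-real-valued convex function `ψ` from the paper: on the budget-constraint set
`C₀ = {π | F {u | 1 + ⟨π,u⟩ < 0} = 0}` it equals
`−⟨π,b⟩ − ((p−1)/2)⟨π,cπ⟩ − ∫ (p⁻¹((1+⟨π,u⟩)₊)^p − p⁻¹ − ⟨π,u⟩·1_{|u|≤1}) dF`,
and `+∞` outside of `C₀`. -/
noncomputable def psi (n : ℕ) (p : ℝ) (F : Measure (EuclideanSpace ℝ (Fin n)))
    (b : EuclideanSpace ℝ (Fin n))
    (c : EuclideanSpace ℝ (Fin n) →ₗ[ℝ] EuclideanSpace ℝ (Fin n))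
    (π : EuclideanSpace ℝ (Fin n)) : EReal :=
  if F {u : EuclideanSpace ℝ (Fin n) | 1 + ⟪π, u⟫ < 0} = 0 then
    (((-⟪π, b⟫) - ((p - 1) / 2) * ⟪π, c π⟫ -
      ∫ u, (p⁻¹ * (max (1 + ⟪π, u⟫) 0) ^ p - p⁻¹ -
        Set.indicator {u : EuclideanSpace ℝ (Fin n) | ‖u‖ ≤ 1}
          (fun u => ⟪π, u⟫) u) ∂F : ℝ) : EReal)
  else (⊤ : EReal)

lemma aux_h (p t : ℝ) (hp0 : 0 < p) (hp1 : p < 1) :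
    |p⁻¹ * (max (1 + t) 0) ^ p - p⁻¹ - t| ≤ p⁻¹ * t ^ 2 := by
  have hpi : 0 < p⁻¹ := inv_pos.mpr hp0
  have hpi1 : 1 ≤ p⁻¹ := (one_le_inv₀ hp0).mpr hp1.le
  have hpp : p⁻¹ * p = 1 := inv_mul_cancel₀ hp0.ne'
  rcases le_or_gt (1 + t) 0 with h | h
  · rw [max_eq_right h, Real.zero_rpow hp0.ne', abs_le]
    constructor <;> nlinarith [sq_nonneg (t + 1)]
  · rw [max_eq_left h.le]
    have h1 : (1 + t) ^ p ≤ 1 + p * t :=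
      rpow_one_add_le_one_add_mul_self (by linarith) hp0.le hp1.le
    have h2 : (1 + t) ^ (1 - p) ≤ 1 + (1 - p) * t :=
      rpow_one_add_le_one_add_mul_self (by linarith) (by linarith) (by linarith)
    have h3 : (1 + t) ^ p * (1 + t) ^ (1 - p) = 1 + t := by
      rw [← Real.rpow_add h]; simp
    have h4 : 0 < (1 + t) ^ p := Real.rpow_pos_of_pos h _
    have hd : p ≤ 1 + (1 - p) * t := by nlinarith
    have h5 : 1 + t ≤ (1 + t) ^ p * (1 + (1 - p) * t) := by
      rw [← h3]
      have := mul_le_mul_of_nonneg_left h2 h4.le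
      rw [h3] at this ⊢
      exact this
    have h6 : 1 + p * t - (1 + t) ^ p ≤ (1 - p) * t ^ 2 := by
      by_contra hc
      push Not at hc
      have h7 : p * ((1 - p) * t ^ 2) ≤ (1 + (1 - p) * t) * ((1 - p) * t ^ 2) :=
        mul_le_mul_of_nonneg_right hd (mul_nonneg (by linarith) (sq_nonneg t))
      have h8 := mul_lt_mul_of_pos_left hc (lt_of_lt_of_le hp0 hd)
      nlinarith
    have e : p⁻¹ * (1 + t) ^ p - p⁻¹ - t = p⁻¹ * ((1 + t) ^ p - 1 - p * t) := by
      linear_combination t * hpp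
    rw [e, abs_mul, abs_of_pos hpi]
    apply mul_le_mul_of_nonneg_left _ hpi.le
    rw [abs_le]
    constructor <;> nlinarith [sq_nonneg t]

noncomputable def gfun (n : ℕ) (p : ℝ) (x u : EuclideanSpace ℝ (Fin n)) : ℝ :=
  p⁻¹ * (max (1 + ⟪x, u⟫) 0) ^ p - p⁻¹ -
        Set.indicator {u : EuclideanSpace ℝ (Fin n) | ‖u‖ ≤ 1} (fun u => ⟪x, u⟫) u

noncomputable def bfun (n : ℕ) (p R : ℝ) (u : EuclideanSpace ℝ (Fin n)) : ℝ :=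
  p⁻¹ * R ^ 2 * min (‖u‖ ^ 2) 1 +
    p⁻¹ * (2 + R ^ p) *
      Set.indicator {u : EuclideanSpace ℝ (Fin n) | 1 < ‖u‖} (fun u => ‖u‖ ^ p) u

lemma gfun_le (n : ℕ) (p R : ℝ) (hp0 : 0 < p) (hp1 : p < 1) (x u : EuclideanSpace ℝ (Fin n))
    (hx : ‖x‖ ≤ R) : ‖gfun n p x u‖ ≤ bfun n p R u := by
  have hpi : 0 < p⁻¹ := inv_pos.mpr hp0
  have hR : 0 ≤ R := (norm_nonneg x).trans hx
  have ht : |⟪x, u⟫| ≤ R * ‖u‖ :=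
    (abs_real_inner_le_norm x u).trans (mul_le_mul_of_nonneg_right hx (norm_nonneg u))
  unfold gfun bfun
  rw [Real.norm_eq_abs]
  rcases le_or_gt ‖u‖ 1 with h | h
  · rw [Set.indicator_of_mem (by exact h), Set.indicator_of_notMem (by simpa using h)]
    have h2 : ‖u‖ ^ 2 ≤ 1 := pow_le_one₀ (norm_nonneg u) h
    rw [min_eq_left h2]
    refine (aux_h p _ hp0 hp1).trans ?_
    have : ⟪x, u⟫ ^ 2 ≤ (R * ‖u‖) ^ 2 := sq_le_sq' (by linarith [(abs_le.mp ht).1]) (abs_le.mp ht).2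
    nlinarith
  · rw [Set.indicator_of_notMem (by simpa using h), Set.indicator_of_mem (by exact h)]
    have h1 : (max (1 + ⟪x, u⟫) 0) ^ p ≤ 1 + R ^ p * ‖u‖ ^ p := by
      calc (max (1 + ⟪x, u⟫) 0) ^ p ≤ (1 + R * ‖u‖) ^ p := by
            apply Real.rpow_le_rpow (le_max_right _ _) _ hp0.le
            apply max_le
            · linarith [(abs_le.mp ht).2]
            · positivity
        _ ≤ 1 ^ p + (R * ‖u‖) ^ p :=
            Real.rpow_add_le_add_rpow zero_le_one (by positivity) hp0.le hp1.le
        _ = _ := by rw [Real.one_rpow, Real.mul_rpow hR (norm_nonneg u)]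
    have h0 : 0 ≤ (max (1 + ⟪x, u⟫) 0) ^ p := Real.rpow_nonneg (le_max_right _ _) _
    have h2 : 1 ≤ ‖u‖ ^ p := Real.one_le_rpow h.le hp0.le
    have h3 : 0 ≤ R ^ p := Real.rpow_nonneg hR _
    have h4 : 0 ≤ p⁻¹ * R ^ 2 * min (‖u‖ ^ 2) 1 := by positivity
    have e : p⁻¹ * (max (1 + ⟪x, u⟫) 0) ^ p - p⁻¹ - 0
        = p⁻¹ * ((max (1 + ⟪x, u⟫) 0) ^ p - 1) := by ring
    have h5 : |(max (1 + ⟪x, u⟫) 0) ^ p - 1| ≤ (2 + R ^ p) * ‖u‖ ^ p := by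
      rw [abs_le]; constructor <;> nlinarith
    rw [e, abs_mul, abs_of_pos hpi]
    have := mul_le_mul_of_nonneg_left h5 hpi.le
    linarith

lemma bfun_int (n : ℕ) (p R : ℝ) 
    (F : Measure (EuclideanSpace ℝ (Fin n)))
    (hFlevy : ∫⁻ u, ENNReal.ofReal (min (‖u‖ ^ (2 : ℕ)) 1) ∂F ≠ ⊤)
    (hAF : ∫⁻ u in {u : EuclideanSpace ℝ (Fin n) | 1 < ‖u‖}, ENNReal.ofReal (‖u‖ ^ p) ∂F ≠ ⊤) :
    Integrable (bfun n p R) F := by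
  have hm : MeasurableSet {u : EuclideanSpace ℝ (Fin n) | 1 < ‖u‖} :=
    measurableSet_lt measurable_const measurable_norm
  apply Integrable.add
  · apply Integrable.const_mul
    refine ⟨by fun_prop, ?_⟩
    rw [hasFiniteIntegral_iff_ofReal (Filter.Eventually.of_forall fun u => by positivity)]
    exact lt_top_iff_ne_top.mpr hFlevy
  · apply Integrable.const_mul
    apply IntegrableOn.integrable_indicator _ hm
    refine ⟨(by fun_prop : Measurable fun u : EuclideanSpace ℝ (Fin n) => ‖u‖ ^ p).aestronglyMeasurable, ?_⟩
    rw [hasFiniteIntegral_iff_ofReal (Filter.Eventually.of_forall fun u => by positivity)]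
    exact lt_top_iff_ne_top.mpr hAF

lemma gfun_meas (n : ℕ) (p : ℝ) (x : EuclideanSpace ℝ (Fin n)) : Measurable (gfun n p x) := by
  have hm : MeasurableSet {u : EuclideanSpace ℝ (Fin n) | ‖u‖ ≤ 1} :=
    measurableSet_le measurable_norm measurable_const
  unfold gfun
  apply Measurable.sub
  · fun_prop
  · exact Measurable.indicator (by fun_prop) hm

lemma gfun_cont (n : ℕ) (p : ℝ) (hp0 : 0 < p) (u : EuclideanSpace ℝ (Fin n)) :
    Continuous (fun x => gfun n p x u) := by
  unfold gfun
  apply Continuous.sub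
  · apply Continuous.sub _ continuous_const
    apply Continuous.mul continuous_const
    apply Continuous.rpow_const (by fun_prop)
    intro x; right; exact hp0.le
  · by_cases h : ‖u‖ ≤ 1
    · simp only [Set.indicator, Set.mem_ofPred_eq, h, if_true]; fun_prop
    · simp only [Set.indicator, Set.mem_ofPred_eq, h, if_false]; fun_prop

lemma gint_cont (n : ℕ) (p : ℝ) (hp0 : 0 < p) (hp1 : p < 1)
    (F : Measure (EuclideanSpace ℝ (Fin n)))
    (hFlevy : ∫⁻ u, ENNReal.ofReal (min (‖u‖ ^ (2 : ℕ)) 1) ∂F ≠ ⊤)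
    (hAF : ∫⁻ u in {u : EuclideanSpace ℝ (Fin n) | 1 < ‖u‖}, ENNReal.ofReal (‖u‖ ^ p) ∂F ≠ ⊤) :
    Continuous (fun x => ∫ u, gfun n p x u ∂F) := by
  rw [continuous_iff_continuousAt]
  intro x
  apply continuousAt_of_dominated (bound := bfun n p (‖x‖ + 1))
  · exact Filter.Eventually.of_forall fun y => (gfun_meas n p y).aestronglyMeasurable
  · have : ∀ᶠ y in 𝓝 x, ‖y‖ < ‖x‖ + 1 :=
      continuous_norm.continuousAt.eventually_lt_const (by linarith)
    filter_upwards [this] with y hy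
    exact Filter.Eventually.of_forall fun u => gfun_le n p _ hp0 hp1 y u hy.le
  · exact bfun_int n p _ F hFlevy hAF
  · exact Filter.Eventually.of_forall fun u => (gfun_cont n p hp0 u).continuousAt

lemma gfun_concave (n : ℕ) (p : ℝ) (hp0 : 0 < p) (hp1 : p < 1)
    (x y u : EuclideanSpace ℝ (Fin n)) (a a' : ℝ) (ha : 0 ≤ a) (ha' : 0 ≤ a') (h : a + a' = 1)
    (hx : 0 ≤ 1 + ⟪x, u⟫) (hy : 0 ≤ 1 + ⟪y, u⟫) :
    a * gfun n p x u + a' * gfun n p y u ≤ gfun n p (a • x + a' • y) u := by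
  have hc := (Real.concaveOn_rpow hp0.le hp1.le).2 (x := 1 + ⟪x, u⟫) hx (y := 1 + ⟪y, u⟫) hy ha ha' h
  simp only [smul_eq_mul] at hc
  have e : 1 + ⟪a • x + a' • y, u⟫ = a * (1 + ⟪x, u⟫) + a' * (1 + ⟪y, u⟫) := by
    rw [inner_add_left, real_inner_smul_left, real_inner_smul_left]; linear_combination -h
  have hz : 0 ≤ a * (1 + ⟪x, u⟫) + a' * (1 + ⟪y, u⟫) := by positivity
  have hpi : 0 < p⁻¹ := inv_pos.mpr hp0
  have ei : Set.indicator {u : EuclideanSpace ℝ (Fin n) | ‖u‖ ≤ 1}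
      (fun u => ⟪a • x + a' • y, u⟫) u =
      a * Set.indicator {u : EuclideanSpace ℝ (Fin n) | ‖u‖ ≤ 1} (fun u => ⟪x, u⟫) u +
      a' * Set.indicator {u : EuclideanSpace ℝ (Fin n) | ‖u‖ ≤ 1} (fun u => ⟪y, u⟫) u := by
    by_cases h : ‖u‖ ≤ 1
    · simp only [Set.indicator, Set.mem_ofPred_eq, h, if_true]
      rw [inner_add_left, real_inner_smul_left, real_inner_smul_left]
    · simp [Set.indicator, h]
  unfold gfun
  rw [ei, e, max_eq_left hx, max_eq_left hy, max_eq_left hz]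
  have := mul_le_mul_of_nonneg_left hc hpi.le
  have h3 : (a + a') * p⁻¹ = p⁻¹ := by rw [h, one_mul]
  nlinarith

noncomputable def Jfun (n : ℕ) (p : ℝ) (F : Measure (EuclideanSpace ℝ (Fin n)))
    (b : EuclideanSpace ℝ (Fin n))
    (c : EuclideanSpace ℝ (Fin n) →ₗ[ℝ] EuclideanSpace ℝ (Fin n))
    (x : EuclideanSpace ℝ (Fin n)) : ℝ :=
  (-⟪x, b⟫) - ((p - 1) / 2) * ⟪x, c x⟫ - ∫ u, gfun n p x u ∂F

lemma psi_mem (n : ℕ) (p : ℝ) (F : Measure (EuclideanSpace ℝ (Fin n)))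
    (b : EuclideanSpace ℝ (Fin n))
    (c : EuclideanSpace ℝ (Fin n) →ₗ[ℝ] EuclideanSpace ℝ (Fin n))
    (x : EuclideanSpace ℝ (Fin n))
    (h : F {u : EuclideanSpace ℝ (Fin n) | 1 + ⟪x, u⟫ < 0} = 0) :
    psi n p F b c x = (Jfun n p F b c x : EReal) := if_pos h

lemma psi_nmem (n : ℕ) (p : ℝ) (F : Measure (EuclideanSpace ℝ (Fin n)))
    (b : EuclideanSpace ℝ (Fin n))
    (c : EuclideanSpace ℝ (Fin n) →ₗ[ℝ] EuclideanSpace ℝ (Fin n))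
    (x : EuclideanSpace ℝ (Fin n))
    (h : ¬ F {u : EuclideanSpace ℝ (Fin n) | 1 + ⟪x, u⟫ < 0} = 0) :
    psi n p F b c x = ⊤ := if_neg h

lemma psi_ne_bot (n : ℕ) (p : ℝ) (F : Measure (EuclideanSpace ℝ (Fin n)))
    (b : EuclideanSpace ℝ (Fin n))
    (c : EuclideanSpace ℝ (Fin n) →ₗ[ℝ] EuclideanSpace ℝ (Fin n))
    (x : EuclideanSpace ℝ (Fin n)) : psi n p F b c x ≠ ⊥ := by
  by_cases h : F {u : EuclideanSpace ℝ (Fin n) | 1 + ⟪x, u⟫ < 0} = 0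
  · rw [psi_mem n p F b c x h]; exact EReal.coe_ne_bot _
  · rw [psi_nmem n p F b c x h]; exact top_ne_bot

lemma C0_closed (n : ℕ) (F : Measure (EuclideanSpace ℝ (Fin n))) :
    IsClosed {x : EuclideanSpace ℝ (Fin n) |
      F {u : EuclideanSpace ℝ (Fin n) | 1 + ⟪x, u⟫ < 0} = 0} := by
  apply IsSeqClosed.isClosed
  intro s x hs hx
  have : {u : EuclideanSpace ℝ (Fin n) | 1 + ⟪x, u⟫ < 0} ⊆
      ⋃ k, {u : EuclideanSpace ℝ (Fin n) | 1 + ⟪s k, u⟫ < 0} := by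
    intro u hu
    have ht : Filter.Tendsto (fun k => 1 + ⟪s k, u⟫) Filter.atTop (𝓝 (1 + ⟪x, u⟫)) :=
      (hx.inner tendsto_const_nhds).const_add 1
    obtain ⟨k, hk⟩ := (ht.eventually_lt_const hu).exists
    exact Set.mem_iUnion.mpr ⟨k, hk⟩
  exact measure_mono_null this (measure_iUnion_null hs)

/-- Under `(A_F)`, `ψ` is a closed proper convex function on `ℝⁿ`:
it is convex (Jensen inequality with `EReal` values), lower semicontinuous, nowhere `−∞`,
and `ψ(0) = 0` (so it is finite somewhere). -/
theorem psi_closed_proper_convex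
    (n : ℕ) (hn : 1 ≤ n) (p : ℝ) (hp0 : 0 < p) (hp1 : p < 1)
    (F : Measure (EuclideanSpace ℝ (Fin n)))
    (hF0 : F {(0 : EuclideanSpace ℝ (Fin n))} = 0)
    (hFlevy : ∫⁻ u, ENNReal.ofReal (min (‖u‖ ^ (2 : ℕ)) 1) ∂F ≠ ⊤)
    (hAF : ∫⁻ u in {u : EuclideanSpace ℝ (Fin n) | 1 < ‖u‖}, ENNReal.ofReal (‖u‖ ^ p) ∂F ≠ ⊤)
    (b : EuclideanSpace ℝ (Fin n))
    (c : EuclideanSpace ℝ (Fin n) →ₗ[ℝ] EuclideanSpace ℝ (Fin n))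
    (hcsymm : ∀ x y : EuclideanSpace ℝ (Fin n), ⟪c x, y⟫ = ⟪x, c y⟫)
    (hcpsd : ∀ x : EuclideanSpace ℝ (Fin n), 0 ≤ ⟪x, c x⟫) :
    (∀ x y : EuclideanSpace ℝ (Fin n), ∀ a a' : ℝ, 0 ≤ a → 0 ≤ a' → a + a' = 1 →
      psi n p F b c (a • x + a' • y) ≤
        (a : EReal) * psi n p F b c x + (a' : EReal) * psi n p F b c y) ∧
    LowerSemicontinuous (psi n p F b c) ∧
    (∀ π : EuclideanSpace ℝ (Fin n), psi n p F b c π ≠ ⊥) ∧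
    psi n p F b c 0 = 0 := by
  have hne := psi_ne_bot n p F b c
  have hgi : ∀ x, Integrable (gfun n p x) F := fun x =>
    (bfun_int n p ‖x‖ F hFlevy hAF).mono' (gfun_meas n p x).aestronglyMeasurable
      (Filter.Eventually.of_forall fun u => gfun_le n p _ hp0 hp1 x u le_rfl)
  have hcc : Continuous c := c.continuous_of_finiteDimensional
  have hJ : Continuous (Jfun n p F b c) := by
    unfold Jfun
    exact Continuous.sub (by fun_prop) (gint_cont n p hp0 hp1 F hFlevy hAF)
  refine ⟨?_, ?_, hne, ?_⟩
  · intro x y a a' ha ha' h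
    rcases ha.eq_or_lt with rfl | hap
    · have : a' = 1 := by linarith
      subst this; simp
    rcases ha'.eq_or_lt with rfl | hap'
    · have : a = 1 := by linarith
      subst this; simp
    have hnb : ∀ (r : ℝ) (z), 0 < r → (r : EReal) * psi n p F b c z ≠ ⊥ := by
      intro r z hr hb
      by_cases hz : F {u : EuclideanSpace ℝ (Fin n) | 1 + ⟪z, u⟫ < 0} = 0
      · rw [psi_mem n p F b c z hz, ← EReal.coe_mul] at hb
        exact EReal.coe_ne_bot _ hb
      · rw [psi_nmem n p F b c z hz, EReal.coe_mul_top_of_pos hr] at hb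
        exact top_ne_bot hb
    by_cases hx : F {u : EuclideanSpace ℝ (Fin n) | 1 + ⟪x, u⟫ < 0} = 0
    swap
    · rw [psi_nmem n p F b c x hx, EReal.coe_mul_top_of_pos hap,
        EReal.top_add_of_ne_bot (hnb a' y hap')]
      exact le_top
    by_cases hy : F {u : EuclideanSpace ℝ (Fin n) | 1 + ⟪y, u⟫ < 0} = 0
    swap
    · rw [psi_nmem n p F b c y hy, EReal.coe_mul_top_of_pos hap',
        EReal.add_top_of_ne_bot (hnb a x hap)]
      exact le_top
    have hz : F {u : EuclideanSpace ℝ (Fin n) | 1 + ⟪a • x + a' • y, u⟫ < 0} = 0 := by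
      refine measure_mono_null ?_ (measure_union_null hx hy)
      intro u hu
      by_contra hc
      simp only [Set.mem_union, Set.mem_ofPred_eq, not_or, not_lt] at hc hu
      rw [inner_add_left, real_inner_smul_left, real_inner_smul_left] at hu
      nlinarith [hc.1, hc.2]
    rw [psi_mem n p F b c x hx, psi_mem n p F b c y hy, psi_mem n p F b c _ hz,
      ← EReal.coe_mul, ← EReal.coe_mul, ← EReal.coe_add, EReal.coe_le_coe_iff]
    have hI : a * ∫ u, gfun n p x u ∂F + a' * ∫ u, gfun n p y u ∂F ≤
        ∫ u, gfun n p (a • x + a' • y) u ∂F := by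
      rw [← integral_const_mul, ← integral_const_mul,
        ← integral_add ((hgi x).const_mul a) ((hgi y).const_mul a')]
      apply integral_mono_ae (((hgi x).const_mul a).add ((hgi y).const_mul a')) (hgi _)
      have hx' : ∀ᵐ u ∂F, ¬ (1 + ⟪x, u⟫ < 0) := by
        rw [ae_iff]; simpa using hx
      have hy' : ∀ᵐ u ∂F, ¬ (1 + ⟪y, u⟫ < 0) := by
        rw [ae_iff]; simpa using hy
      filter_upwards [hx', hy'] with u h1 h2
      exact gfun_concave n p hp0 hp1 x y u a a' ha ha' h (not_lt.mp h1) (not_lt.mp h2)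
    have hq : ⟪a • x + a' • y, c (a • x + a' • y)⟫ ≤ a * ⟪x, c x⟫ + a' * ⟪y, c y⟫ := by
      have h1 := hcpsd (x - y)
      have h2 : ⟪y, c x⟫ = ⟪x, c y⟫ := by rw [← hcsymm x y, real_inner_comm]
      simp only [map_sub, map_add, map_smul, inner_add_left, inner_add_right, inner_sub_left,
        inner_sub_right, real_inner_smul_left, real_inner_smul_right, h2] at h1 ⊢
      have h3 : a' = 1 - a := by linarith
      subst h3
      nlinarith [mul_nonneg (mul_nonneg ha ha') h1]
    unfold Jfun
    have hl : ⟪a • x + a' • y, b⟫ = a * ⟪x, b⟫ + a' * ⟪y, b⟫ := by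
      rw [inner_add_left, real_inner_smul_left, real_inner_smul_left]
    rw [hl]
    have := mul_le_mul_of_nonneg_left hq (by linarith : 0 ≤ (1 - p) / 2)
    linarith
  · intro x y hy
    by_cases hx : F {u : EuclideanSpace ℝ (Fin n) | 1 + ⟪x, u⟫ < 0} = 0
    · rw [psi_mem n p F b c x hx] at hy
      have hc : Continuous fun z => (Jfun n p F b c z : EReal) :=
        continuous_coe_real_ereal.comp hJ
      filter_upwards [hc.continuousAt.eventually_const_lt hy] with z hz
      by_cases hzm : F {u : EuclideanSpace ℝ (Fin n) | 1 + ⟪z, u⟫ < 0} = 0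
      · rwa [psi_mem n p F b c z hzm]
      · rw [psi_nmem n p F b c z hzm]; exact lt_of_lt_of_le hz le_top
    · rw [psi_nmem n p F b c x hx] at hy
      filter_upwards [(C0_closed n F).isOpen_compl.mem_nhds hx] with z hz
      rwa [psi_nmem n p F b c z hz]
  · rw [psi_mem n p F b c 0 (by simp [not_lt.mpr zero_le_one])]
    simp [Jfun, gfun]
end

section
/- Let π ∈ ℝⁿ. (a) If F(Λ₋(π)) = 0, then λ⁻¹π ∈ C₀ for every λ > 0, and: if cπ = 0 then λ·ψ(π/λ) converges, as λ → 0⁺, to ∫_{|u|≤1} ⟨π,u⟩ F(du) − ⟨π,b⟩ (this value is well defined in (−∞,+∞], since ⟨π,u⟩ ≥ 0 for F-a.e. u); if cπ ≠ 0 then λ·ψ(π/λ) → +∞ as λ → 0⁺. (b) If F(Λ₋(π)) > 0, then there exists λ₀ > 0 such that π/λ ∉ C₀, hence ψ(π/λ) = +∞, for all 0 < λ ≤ λ₀; in particular λ·ψ(π/λ) → +∞ as λ → 0⁺. -/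
open MeasureTheory
open scoped RealInnerProductSpace ENNReal Topology

/-- The scalar utility increment. -/
noncomputable def KK (p t : ℝ) : ℝ := p⁻¹ * (max (1 + t) 0) ^ p - p⁻¹

lemma KK_nonneg {p t : ℝ} (hp0 : 0 < p) (ht : 0 ≤ t) : 0 ≤ KK p t := by
  have h : 1 ≤ (max (1 + t) 0) ^ p :=
    Real.one_le_rpow (le_max_of_le_left (by linarith)) hp0.le
  have hp : 0 < p⁻¹ := inv_pos.2 hp0
  unfold KK
  nlinarith

lemma KK_le {p t : ℝ} (hp0 : 0 < p) (hp1 : p < 1) (ht : 0 ≤ t) : KK p t ≤ t := by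
  unfold KK
  rw [max_eq_left (by linarith)]
  have h := rpow_one_add_le_one_add_mul_self (s := t) (by linarith) hp0.le hp1.le
  have h2 : p⁻¹ * (1 + t) ^ p ≤ p⁻¹ * (1 + p * t) :=
    mul_le_mul_of_nonneg_left h (inv_pos.2 hp0).le
  have h3 : p⁻¹ * (1 + p * t) = p⁻¹ + t := by field_simp
  linarith

lemma KK_le_rpow {p t : ℝ} (hp0 : 0 < p) (hp1 : p < 1) (ht : 0 ≤ t) :
    KK p t ≤ p⁻¹ * t ^ p := by
  unfold KK
  rw [max_eq_left (by linarith)]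
  have h := Real.rpow_add_le_add_rpow (zero_le_one) ht hp0.le hp1.le
  rw [Real.one_rpow] at h
  have h2 := mul_le_mul_of_nonneg_left h (inv_pos.2 hp0).le
  linarith

lemma KK_ge {p t : ℝ} (hp0 : 0 < p) (hp1 : p < 1) (ht : 0 ≤ t) :
    t - KK p t ≤ p⁻¹ * (1 - p) * t ^ 2 := by
  unfold KK
  rw [max_eq_left (by linarith)]
  have h := rpow_one_add_le_one_add_mul_self (s := t) (p := 1 - p)
    (by linarith) (by linarith) (by linarith)
  have hm : (1 + t) ^ p * (1 + t) ^ (1 - p) = 1 + t := by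
    rw [← Real.rpow_add (by linarith)]; simp
  have hpos : 0 < (1 + t) ^ p := Real.rpow_pos_of_pos (by linarith) _
  have h1 : 1 + t ≤ (1 + t) ^ p * (1 + (1 - p) * t) := by
    rw [← hm]
    conv_rhs => rw [hm]
    exact mul_le_mul_of_nonneg_left h hpos.le
  have hq : 0 ≤ (1 - p) * t := mul_nonneg (by linarith) ht
  have h4 : 1 + p * t - (1 - p) * t ^ 2 ≤ (1 + t) ^ p := by
    by_contra hc
    push Not at hc
    have : (1 + t) ^ p * (1 + (1 - p) * t) <
        (1 + p * t - (1 - p) * t ^ 2) * (1 + (1 - p) * t) :=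
      mul_lt_mul_of_pos_right hc (by linarith)
    have h6 : (1 + p * t - (1 - p) * t ^ 2) = (1 + t) * (1 - (1 - p) * t) := by ring
    rw [h6] at this
    nlinarith [mul_nonneg (by linarith : 0 ≤ 1 + t) (sq_nonneg ((1 - p) * t))]
  have h5 := mul_le_mul_of_nonneg_left h4 (inv_pos.2 hp0).le
  have h7 : p⁻¹ * (1 + p * t - (1 - p) * t ^ 2) = p⁻¹ + t - p⁻¹ * (1 - p) * t ^ 2 := by
    field_simp
  linarith

lemma KK_scaled_le {p l x : ℝ} (hp0 : 0 < p) (hp1 : p < 1) (hl : 0 < l) (hx : 0 ≤ x) :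
    l * KK p (l⁻¹ * x) ≤ l ^ (1 - p) * (p⁻¹ * x ^ p) := by
  have h := KK_le_rpow hp0 hp1 (mul_nonneg (inv_pos.2 hl).le hx)
  have h2 := mul_le_mul_of_nonneg_left h hl.le
  refine h2.trans (le_of_eq ?_)
  rw [Real.mul_rpow (inv_pos.2 hl).le hx, Real.inv_rpow hl.le, Real.rpow_sub hl, Real.rpow_one]
  ring

lemma KK_scaled_tendsto {p x : ℝ} (hp0 : 0 < p) (hp1 : p < 1) (hx : 0 ≤ x) :
    Filter.Tendsto (fun l : ℝ => l * KK p (l⁻¹ * x)) (𝓝[>] 0) (𝓝 0) := by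
  have h0 : Filter.Tendsto (fun l : ℝ => l ^ (1 - p) * (p⁻¹ * x ^ p)) (𝓝[>] 0) (𝓝 0) := by
    have : Filter.Tendsto (fun l : ℝ => l ^ (1 - p) * (p⁻¹ * x ^ p)) (𝓝 0)
        (𝓝 ((0:ℝ) ^ (1 - p) * (p⁻¹ * x ^ p))) :=
      ((Real.continuousAt_rpow_const 0 (1 - p) (Or.inr (by linarith))).tendsto).mul_const _
    rw [Real.zero_rpow (by linarith), zero_mul] at this
    exact this.mono_left nhdsWithin_le_nhds
  refine squeeze_zero' ?_ ?_ h0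
  · filter_upwards [self_mem_nhdsWithin] with l hl
    exact mul_nonneg (le_of_lt hl) (KK_nonneg hp0 (mul_nonneg (inv_pos.2 hl).le hx))
  · filter_upwards [self_mem_nhdsWithin] with l hl
    exact KK_scaled_le hp0 hp1 hl hx

lemma quad_pos {n : ℕ} (c : EuclideanSpace ℝ (Fin n) →ₗ[ℝ] EuclideanSpace ℝ (Fin n))
    (hcsymm : ∀ x y : EuclideanSpace ℝ (Fin n), ⟪c x, y⟫ = ⟪x, c y⟫)
    (hcpsd : ∀ x : EuclideanSpace ℝ (Fin n), 0 ≤ ⟪x, c x⟫)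
    (π : EuclideanSpace ℝ (Fin n)) (h : c π ≠ 0) : 0 < ⟪π, c π⟫ := by
  rcases (hcpsd π).lt_or_eq with h1 | h1
  · exact h1
  exfalso
  have hN : 0 < ⟪c π, c π⟫ := by
    rw [real_inner_self_eq_norm_sq]; have := norm_pos_iff.2 h; positivity
  have key : ∀ t : ℝ, 0 ≤ 2 * t * ⟪c π, c π⟫ + t ^ 2 * ⟪c π, c (c π)⟫ := by
    intro t
    have := hcpsd (π + t • c π)
    simp only [map_add, map_smul, inner_add_left, inner_add_right, inner_smul_left,
      inner_smul_right, ← h1, ← hcsymm π (c π)] at this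
    simp only [conj_trivial] at this
    linarith
  have ha := hcpsd (c π)
  set N := ⟪c π, c π⟫
  set a := ⟪c π, c (c π)⟫
  have := key (-(N / (a + 1)))
  have e : 2 * -(N / (a + 1)) * N + (-(N / (a + 1))) ^ 2 * a
      = - (N ^ 2 * (a + 2) / (a + 1) ^ 2) := by field_simp; ring
  rw [e] at this
  have : 0 < (N ^ 2 * (a + 2) / (a + 1) ^ 2) := by positivity
  linarith

/-- small jump part -/
noncomputable def AA (n : ℕ) (p : ℝ) (F : Measure (EuclideanSpace ℝ (Fin n)))
    (π : EuclideanSpace ℝ (Fin n)) (l : ℝ) : ℝ≥0∞ :=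
  ∫⁻ u in {u : EuclideanSpace ℝ (Fin n) | ‖u‖ ≤ 1},
    ENNReal.ofReal (⟪π, u⟫ - l * KK p (l⁻¹ * ⟪π, u⟫)) ∂F

/-- large jump part -/
noncomputable def BB (n : ℕ) (p : ℝ) (F : Measure (EuclideanSpace ℝ (Fin n)))
    (π : EuclideanSpace ℝ (Fin n)) (l : ℝ) : ℝ≥0∞ :=
  ∫⁻ u in {u : EuclideanSpace ℝ (Fin n) | 1 < ‖u‖},
    ENNReal.ofReal (l * KK p (l⁻¹ * ⟪π, u⟫)) ∂F

lemma measS (n : ℕ) : MeasurableSet {u : EuclideanSpace ℝ (Fin n) | ‖u‖ ≤ 1} :=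
  measurableSet_le measurable_norm measurable_const

lemma measT (n : ℕ) : MeasurableSet {u : EuclideanSpace ℝ (Fin n) | 1 < ‖u‖} :=
  measurableSet_lt measurable_const measurable_norm

lemma measK (n : ℕ) (p : ℝ) (π : EuclideanSpace ℝ (Fin n)) (l : ℝ) :
    Measurable (fun u : EuclideanSpace ℝ (Fin n) => l * KK p (l⁻¹ * ⟪π, u⟫)) := by
  unfold KK
  fun_prop

section
variable {n : ℕ} {p : ℝ} {F : Measure (EuclideanSpace ℝ (Fin n))}
    {π : EuclideanSpace ℝ (Fin n)}

lemma x_nonneg (h : F {u : EuclideanSpace ℝ (Fin n) | ⟪π, u⟫ < 0} = 0) :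
    ∀ᵐ u ∂F, 0 ≤ ⟪π, u⟫ := by
  rw [ae_iff]; simpa using h

lemma AA_tendsto (hp0 : 0 < p) (hp1 : p < 1)
    (h : F {u : EuclideanSpace ℝ (Fin n) | ⟪π, u⟫ < 0} = 0) :
    Filter.Tendsto (AA n p F π) (𝓝[>] 0)
      (𝓝 (∫⁻ u in {u : EuclideanSpace ℝ (Fin n) | ‖u‖ ≤ 1}, ENNReal.ofReal ⟪π, u⟫ ∂F)) := by
  have hx := ae_restrict_of_ae (s := {u : EuclideanSpace ℝ (Fin n) | ‖u‖ ≤ 1}) (x_nonneg h)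
  refine Filter.tendsto_of_seq_tendsto fun s hs => ?_
  rw [tendsto_nhdsWithin_iff] at hs
  have hs' : Filter.Tendsto s Filter.atTop (𝓝[>] 0) := tendsto_nhdsWithin_iff.2 hs
  refine tendsto_of_le_liminf_of_limsup_le ?_ ?_
  · refine le_trans (le_of_eq (lintegral_congr_ae ?_)) (lintegral_liminf_le (fun k =>
      ENNReal.measurable_ofReal.comp ((by fun_prop :
        Measurable fun u : EuclideanSpace ℝ (Fin n) => ⟪π, u⟫).sub (measK n p π (s k)))))
    filter_upwards [hx] with u hu
    have := (KK_scaled_tendsto hp0 hp1 hu).comp hs'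
    have h2 := ENNReal.tendsto_ofReal (this.const_sub ⟪π, u⟫)
    rw [sub_zero] at h2
    exact h2.liminf_eq.symm
  · refine Filter.limsup_le_of_le (by isBoundedDefault) ?_
    filter_upwards [hs.2] with k hk
    refine lintegral_mono_ae ?_
    filter_upwards [hx] with u hu
    refine ENNReal.ofReal_le_ofReal ?_
    have := mul_nonneg (le_of_lt hk) (KK_nonneg hp0 (mul_nonneg (inv_pos.2 hk).le hu))
    linarith

lemma AA_ne_top (hp0 : 0 < p) (hp1 : p < 1)
    (hFlevy : ∫⁻ u, ENNReal.ofReal (min (‖u‖ ^ (2 : ℕ)) 1) ∂F ≠ ⊤)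
    (h : F {u : EuclideanSpace ℝ (Fin n) | ⟪π, u⟫ < 0} = 0) {l : ℝ} (hl : 0 < l) :
    AA n p F π l ≠ ⊤ := by
  have hx := ae_restrict_of_ae (s := {u : EuclideanSpace ℝ (Fin n) | ‖u‖ ≤ 1}) (x_nonneg h)
  set D : ℝ := p⁻¹ * (1 - p) * l⁻¹ * ‖π‖ ^ 2 with hD
  have hD0 : 0 ≤ D := by
    have : 0 ≤ 1 - p := by linarith
    positivity
  have hle : AA n p F π l ≤ ENNReal.ofReal D *
      ∫⁻ u, ENNReal.ofReal (min (‖u‖ ^ (2 : ℕ)) 1) ∂F := by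
    refine le_trans ?_ (mul_le_mul_right (setLIntegral_le_lintegral
      {u : EuclideanSpace ℝ (Fin n) | ‖u‖ ≤ 1} _) _)
    rw [← lintegral_const_mul' _ _ ENNReal.ofReal_ne_top]
    refine lintegral_mono_ae ?_
    filter_upwards [hx, ae_restrict_mem (measS n)] with u hu hu1
    rw [← ENNReal.ofReal_mul hD0]
    refine ENNReal.ofReal_le_ofReal ?_
    have hu1' : ‖u‖ ≤ 1 := hu1
    rw [min_eq_left (by nlinarith [norm_nonneg u])]
    have h1 := KK_ge hp0 hp1 (mul_nonneg (inv_pos.2 hl).le hu)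
    have h2 := mul_le_mul_of_nonneg_left h1 hl.le
    have h3 : l * (l⁻¹ * ⟪π, u⟫ - KK p (l⁻¹ * ⟪π, u⟫)) =
        ⟪π, u⟫ - l * KK p (l⁻¹ * ⟪π, u⟫) := by field_simp
    rw [h3] at h2
    refine h2.trans ?_
    have h4 : l * (p⁻¹ * (1 - p) * (l⁻¹ * ⟪π, u⟫) ^ 2) =
        (p⁻¹ * (1 - p) * l⁻¹) * ⟪π, u⟫ ^ 2 := by field_simp
    have h5 : ⟪π, u⟫ ^ 2 ≤ (‖π‖ * ‖u‖) ^ 2 := by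
      have := real_inner_le_norm π u
      gcongr
    rw [h4, hD, mul_assoc _ (‖π‖ ^ 2), ← mul_pow]
    have : 0 ≤ 1 - p := by linarith
    gcongr
  exact ne_top_of_le_ne_top (ENNReal.mul_ne_top ENNReal.ofReal_ne_top hFlevy) hle

lemma BB_le (hp0 : 0 < p) (hp1 : p < 1)
    (h : F {u : EuclideanSpace ℝ (Fin n) | ⟪π, u⟫ < 0} = 0) {l : ℝ} (hl : 0 < l) :
    BB n p F π l ≤ ENNReal.ofReal (l ^ (1 - p) * (p⁻¹ * ‖π‖ ^ p)) *
      ∫⁻ u in {u : EuclideanSpace ℝ (Fin n) | 1 < ‖u‖}, ENNReal.ofReal (‖u‖ ^ p) ∂F := by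
  have hx := ae_restrict_of_ae (s := {u : EuclideanSpace ℝ (Fin n) | 1 < ‖u‖}) (x_nonneg h)
  rw [← lintegral_const_mul' _ _ ENNReal.ofReal_ne_top]
  refine lintegral_mono_ae ?_
  filter_upwards [hx] with u hu
  rw [← ENNReal.ofReal_mul (by positivity)]
  refine ENNReal.ofReal_le_ofReal ?_
  refine (KK_scaled_le hp0 hp1 hl hu).trans ?_
  have h5 : ⟪π, u⟫ ^ p ≤ (‖π‖ * ‖u‖) ^ p :=
    Real.rpow_le_rpow hu (real_inner_le_norm π u) hp0.le
  rw [Real.mul_rpow (norm_nonneg _) (norm_nonneg _)] at h5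
  have : l ^ (1 - p) * (p⁻¹ * ‖π‖ ^ p) * ‖u‖ ^ p =
    l ^ (1 - p) * (p⁻¹ * (‖π‖ ^ p * ‖u‖ ^ p)) := by ring
  rw [this]
  gcongr

lemma BB_ne_top (hp0 : 0 < p) (hp1 : p < 1)
    (hAF : ∫⁻ u in {u : EuclideanSpace ℝ (Fin n) | 1 < ‖u‖}, ENNReal.ofReal (‖u‖ ^ p) ∂F ≠ ⊤)
    (h : F {u : EuclideanSpace ℝ (Fin n) | ⟪π, u⟫ < 0} = 0) {l : ℝ} (hl : 0 < l) :
    BB n p F π l ≠ ⊤ :=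
  ne_top_of_le_ne_top (ENNReal.mul_ne_top ENNReal.ofReal_ne_top hAF) (BB_le hp0 hp1 h hl)

lemma BB_tendsto (hp0 : 0 < p) (hp1 : p < 1)
    (hAF : ∫⁻ u in {u : EuclideanSpace ℝ (Fin n) | 1 < ‖u‖}, ENNReal.ofReal (‖u‖ ^ p) ∂F ≠ ⊤)
    (h : F {u : EuclideanSpace ℝ (Fin n) | ⟪π, u⟫ < 0} = 0) :
    Filter.Tendsto (fun l => (BB n p F π l).toReal) (𝓝[>] 0) (𝓝 0) := by
  set J := ∫⁻ u in {u : EuclideanSpace ℝ (Fin n) | 1 < ‖u‖}, ENNReal.ofReal (‖u‖ ^ p) ∂F with hJ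
  have h0 : Filter.Tendsto (fun l : ℝ => l ^ (1 - p) * (p⁻¹ * ‖π‖ ^ p) * J.toReal)
      (𝓝[>] 0) (𝓝 0) := by
    have : Filter.Tendsto (fun l : ℝ => l ^ (1 - p) * (p⁻¹ * ‖π‖ ^ p) * J.toReal) (𝓝 0)
        (𝓝 ((0:ℝ) ^ (1 - p) * (p⁻¹ * ‖π‖ ^ p) * J.toReal)) :=
      (((Real.continuousAt_rpow_const 0 (1 - p)
        (Or.inr (by linarith))).tendsto).mul_const _).mul_const _
    rw [Real.zero_rpow (by linarith), zero_mul, zero_mul] at this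
    exact this.mono_left nhdsWithin_le_nhds
  refine squeeze_zero' (Filter.Eventually.of_forall fun _ => ENNReal.toReal_nonneg) ?_ h0
  filter_upwards [self_mem_nhdsWithin] with l hl
  have hl' : 0 < l := hl
  have := ENNReal.toReal_mono (ENNReal.mul_ne_top ENNReal.ofReal_ne_top hAF) (BB_le hp0 hp1 h hl')
  rwa [ENNReal.toReal_mul, ENNReal.toReal_ofReal (by positivity)] at this

lemma C0_mem (h : F {u : EuclideanSpace ℝ (Fin n) | ⟪π, u⟫ < 0} = 0) {l : ℝ} (hl : 0 < l) :
    F {u : EuclideanSpace ℝ (Fin n) | 1 + ⟪l⁻¹ • π, u⟫ < 0} = 0 := by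
  refine measure_mono_null (fun u hu => ?_) h
  simp only [Set.mem_ofPred_eq, real_inner_smul_left] at hu ⊢
  by_contra hc
  push Not at hc
  have := mul_nonneg (inv_pos.2 hl).le hc
  linarith

lemma psi_eq (hp0 : 0 < p) (hp1 : p < 1)
    (hFlevy : ∫⁻ u, ENNReal.ofReal (min (‖u‖ ^ (2 : ℕ)) 1) ∂F ≠ ⊤)
    (hAF : ∫⁻ u in {u : EuclideanSpace ℝ (Fin n) | 1 < ‖u‖}, ENNReal.ofReal (‖u‖ ^ p) ∂F ≠ ⊤)
    (b : EuclideanSpace ℝ (Fin n))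
    (c : EuclideanSpace ℝ (Fin n) →ₗ[ℝ] EuclideanSpace ℝ (Fin n))
    (h : F {u : EuclideanSpace ℝ (Fin n) | ⟪π, u⟫ < 0} = 0) {l : ℝ} (hl : 0 < l) :
    (l : EReal) * psi n p F b c (l⁻¹ • π) =
      (AA n p F π l : EReal) + ((-(BB n p F π l).toReal - ⟪π, b⟫ +
        (1 - p) / 2 * ⟪π, c π⟫ * l⁻¹ : ℝ) : EReal) := by
  have hS := measS n
  have hT := measT n
  have hx := x_nonneg h
  have hc : {u : EuclideanSpace ℝ (Fin n) | ‖u‖ ≤ 1}ᶜ =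
      {u : EuclideanSpace ℝ (Fin n) | 1 < ‖u‖} := by ext u; simp
  set G : EuclideanSpace ℝ (Fin n) → ℝ := fun u =>
    p⁻¹ * (max (1 + ⟪l⁻¹ • π, u⟫) 0) ^ p - p⁻¹ -
        Set.indicator {u : EuclideanSpace ℝ (Fin n) | ‖u‖ ≤ 1}
          (fun u => ⟪l⁻¹ • π, u⟫) u with hG
  have mx : Measurable fun u : EuclideanSpace ℝ (Fin n) => ⟪π, u⟫ := by fun_prop
  have mA := mx.sub (measK n p π l)
  have hA := AA_ne_top hp0 hp1 hFlevy h hl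
  have hB := BB_ne_top hp0 hp1 hAF h hl
  have nA : 0 ≤ᵐ[F.restrict {u : EuclideanSpace ℝ (Fin n) | ‖u‖ ≤ 1}]
      (fun u => ⟪π, u⟫ - l * KK p (l⁻¹ * ⟪π, u⟫)) := by
    filter_upwards [ae_restrict_of_ae hx] with u hu
    have := mul_le_mul_of_nonneg_left
      (KK_le hp0 hp1 (mul_nonneg (inv_pos.2 hl).le hu)) hl.le
    rw [mul_inv_cancel_left₀ hl.ne'] at this
    simpa using this
  have nB : 0 ≤ᵐ[F.restrict {u : EuclideanSpace ℝ (Fin n) | 1 < ‖u‖}]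
      (fun u => l * KK p (l⁻¹ * ⟪π, u⟫)) := by
    filter_upwards [ae_restrict_of_ae hx] with u hu
    exact mul_nonneg hl.le (KK_nonneg hp0 (mul_nonneg (inv_pos.2 hl).le hu))
  have iA : IntegrableOn (fun u => ⟪π, u⟫ - l * KK p (l⁻¹ * ⟪π, u⟫))
      {u : EuclideanSpace ℝ (Fin n) | ‖u‖ ≤ 1} F :=
    (lintegral_ofReal_ne_top_iff_integrable mA.aestronglyMeasurable nA).1 hA
  have iB : IntegrableOn (fun u => l * KK p (l⁻¹ * ⟪π, u⟫))
      {u : EuclideanSpace ℝ (Fin n) | 1 < ‖u‖} F :=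
    (lintegral_ofReal_ne_top_iff_integrable (measK n p π l).aestronglyMeasurable nB).1 hB
  have eA : ∀ u ∈ {u : EuclideanSpace ℝ (Fin n) | ‖u‖ ≤ 1},
      -l⁻¹ * (⟪π, u⟫ - l * KK p (l⁻¹ * ⟪π, u⟫)) = G u := by
    intro u hu
    simp only [hG, Set.indicator_of_mem hu, real_inner_smul_left, KK]
    field_simp
    ring
  have eB : ∀ u ∈ {u : EuclideanSpace ℝ (Fin n) | 1 < ‖u‖},
      l⁻¹ * (l * KK p (l⁻¹ * ⟪π, u⟫)) = G u := by
    intro u hu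
    have hu' : u ∉ {u : EuclideanSpace ℝ (Fin n) | ‖u‖ ≤ 1} := by
      rw [← Set.mem_compl_iff, hc]; exact hu
    simp only [hG, Set.indicator_of_notMem hu', real_inner_smul_left, KK]
    rw [inv_mul_cancel_left₀ hl.ne', sub_zero]
  have gA : IntegrableOn G {u : EuclideanSpace ℝ (Fin n) | ‖u‖ ≤ 1} F :=
    (integrableOn_congr_fun eA hS).1 (iA.const_mul _)
  have gB : IntegrableOn G {u : EuclideanSpace ℝ (Fin n) | 1 < ‖u‖} F :=
    (integrableOn_congr_fun eB hT).1 (iB.const_mul _)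
  have gG : Integrable G F := by
    rw [← integrableOn_univ, ← Set.union_compl_self {u : EuclideanSpace ℝ (Fin n) | ‖u‖ ≤ 1}, hc]
    exact gA.union gB
  have key : ∫ u, G u ∂F = -l⁻¹ * (AA n p F π l).toReal + l⁻¹ * (BB n p F π l).toReal := by
    rw [← integral_add_compl hS gG, hc, ← setIntegral_congr_fun hS eA,
      ← setIntegral_congr_fun hT eB, integral_const_mul, integral_const_mul,
      integral_eq_lintegral_of_nonneg_ae nA mA.aestronglyMeasurable,
      integral_eq_lintegral_of_nonneg_ae nB (measK n p π l).aestronglyMeasurable]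
    rfl
  unfold psi
  rw [if_pos (C0_mem h hl), key, ← EReal.coe_ennreal_toReal hA, ← EReal.coe_mul,
    ← EReal.coe_add]
  congr 1
  simp only [map_smul, real_inner_smul_left, real_inner_smul_right]
  field_simp
  ring

end

/-- Recession-function computation of `ψ` along `π` (direction `+π`).
(a) If `F(Λ₋(π)) = 0` then `λ⁻¹π ∈ C₀` for all `λ > 0`; if moreover `cπ = 0` then
`λ·ψ(π/λ) → ∫_{|u|≤1} ⟨π,u⟩ dF − ⟨π,b⟩` (a value in `(−∞,+∞]`) as `λ → 0⁺`, while if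
`cπ ≠ 0` then `λ·ψ(π/λ) → +∞`.
(b) If `F(Λ₋(π)) > 0` then `π/λ ∉ C₀` (hence `ψ(π/λ) = +∞`) for all small `λ > 0`, and
`λ·ψ(π/λ) → +∞` as `λ → 0⁺`. -/
theorem psi_recession_along_pi
    (n : ℕ) (hn : 1 ≤ n) (p : ℝ) (hp0 : 0 < p) (hp1 : p < 1)
    (F : Measure (EuclideanSpace ℝ (Fin n)))
    (hF0 : F {(0 : EuclideanSpace ℝ (Fin n))} = 0)
    (hFlevy : ∫⁻ u, ENNReal.ofReal (min (‖u‖ ^ (2 : ℕ)) 1) ∂F ≠ ⊤)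
    (hAF : ∫⁻ u in {u : EuclideanSpace ℝ (Fin n) | 1 < ‖u‖}, ENNReal.ofReal (‖u‖ ^ p) ∂F ≠ ⊤)
    (b : EuclideanSpace ℝ (Fin n))
    (c : EuclideanSpace ℝ (Fin n) →ₗ[ℝ] EuclideanSpace ℝ (Fin n))
    (hcsymm : ∀ x y : EuclideanSpace ℝ (Fin n), ⟪c x, y⟫ = ⟪x, c y⟫)
    (hcpsd : ∀ x : EuclideanSpace ℝ (Fin n), 0 ≤ ⟪x, c x⟫)
    (π : EuclideanSpace ℝ (Fin n)) :
    -- (a)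
    (F {u : EuclideanSpace ℝ (Fin n) | ⟪π, u⟫ < 0} = 0 →
      (∀ l : ℝ, 0 < l →
        F {u : EuclideanSpace ℝ (Fin n) | 1 + ⟪l⁻¹ • π, u⟫ < 0} = 0) ∧
      (c π = 0 →
        Filter.Tendsto (fun l : ℝ => (l : EReal) * psi n p F b c (l⁻¹ • π))
          (𝓝[>] (0 : ℝ))
          (𝓝 (((∫⁻ u in {u : EuclideanSpace ℝ (Fin n) | ‖u‖ ≤ 1},
                  ENNReal.ofReal ⟪π, u⟫ ∂F : ℝ≥0∞) : EReal) - ((⟪π, b⟫ : ℝ) : EReal)))) ∧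
      (c π ≠ 0 →
        Filter.Tendsto (fun l : ℝ => (l : EReal) * psi n p F b c (l⁻¹ • π))
          (𝓝[>] (0 : ℝ)) (𝓝 (⊤ : EReal)))) ∧
    -- (b)
    (F {u : EuclideanSpace ℝ (Fin n) | ⟪π, u⟫ < 0} ≠ 0 →
      (∃ l₀ : ℝ, 0 < l₀ ∧ ∀ l : ℝ, 0 < l → l ≤ l₀ →
        F {u : EuclideanSpace ℝ (Fin n) | 1 + ⟪l⁻¹ • π, u⟫ < 0} ≠ 0 ∧
        psi n p F b c (l⁻¹ • π) = ⊤) ∧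
      Filter.Tendsto (fun l : ℝ => (l : EReal) * psi n p F b c (l⁻¹ • π))
        (𝓝[>] (0 : ℝ)) (𝓝 (⊤ : EReal))) := by
  refine ⟨fun h => ⟨fun l hl => C0_mem h hl, fun hc => ?_, fun hc => ?_⟩, fun h => ?_⟩
  · have e : (fun l : ℝ => (AA n p F π l : EReal) + ((-(BB n p F π l).toReal - ⟪π, b⟫ : ℝ) : EReal))
        =ᶠ[𝓝[>] (0 : ℝ)] (fun l : ℝ => (l : EReal) * psi n p F b c (l⁻¹ • π)) := by
      filter_upwards [self_mem_nhdsWithin] with l hl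
      rw [psi_eq hp0 hp1 hFlevy hAF b c h hl, hc]
      simp
    refine Filter.Tendsto.congr' e ?_
    have h1 := (continuous_coe_ennreal_ereal.tendsto _).comp (AA_tendsto hp0 hp1 h)
    have h2 := EReal.tendsto_coe.2 (((BB_tendsto hp0 hp1 hAF h).neg).sub_const ⟪π, b⟫)
    have h3 := (EReal.continuousAt_add (p := (((∫⁻ u in {u : EuclideanSpace ℝ (Fin n) | ‖u‖ ≤ 1},
                  ENNReal.ofReal ⟪π, u⟫ ∂F : ℝ≥0∞) : EReal), ((-0 - ⟪π, b⟫ : ℝ) : EReal)))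
      (Or.inr (EReal.coe_ne_bot _)) (Or.inr (EReal.coe_ne_top _))).tendsto.comp
      (h1.prodMk_nhds h2)
    have e2 : ((-0 - ⟪π, b⟫ : ℝ) : EReal) = - ((⟪π, b⟫ : ℝ) : EReal) := by
      rw [neg_zero, zero_sub, EReal.coe_neg]
    simp only [e2] at h3
    rw [sub_eq_add_neg]
    exact h3
  · have hq := quad_pos c hcsymm hcpsd π hc
    have h2 : Filter.Tendsto (fun l : ℝ => -(BB n p F π l).toReal - ⟪π, b⟫ +
        (1 - p) / 2 * ⟪π, c π⟫ * l⁻¹) (𝓝[>] 0) Filter.atTop :=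
      Filter.Tendsto.add_atTop ((BB_tendsto hp0 hp1 hAF h).neg.sub_const ⟪π, b⟫)
        (tendsto_inv_nhdsGT_zero.const_mul_atTop (mul_pos (by linarith) hq))
    refine tendsto_nhds_top_mono (EReal.tendsto_coe_nhds_top_iff.2 h2) ?_
    filter_upwards [self_mem_nhdsWithin] with l hl
    rw [psi_eq hp0 hp1 hFlevy hAF b c h hl]
    exact le_add_of_nonneg_left (EReal.coe_ennreal_nonneg _)
  · have hex : ∃ l₀ : ℝ, 0 < l₀ ∧ ∀ l : ℝ, 0 < l → l ≤ l₀ →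
        F {u : EuclideanSpace ℝ (Fin n) | 1 + ⟪l⁻¹ • π, u⟫ < 0} ≠ 0 ∧
        psi n p F b c (l⁻¹ • π) = ⊤ := by
      have hU : ∃ k : ℕ, F {u : EuclideanSpace ℝ (Fin n) | ⟪π, u⟫ < -(1 / ((k : ℝ) + 1))} ≠ 0 := by
        by_contra hcon
        push Not at hcon
        apply h
        refine measure_mono_null (fun u hu => ?_) (measure_iUnion_null hcon)
        have hu' : 0 < -⟪π, u⟫ := neg_pos.2 hu
        obtain ⟨k, hk⟩ := exists_nat_one_div_lt hu'
        refine Set.mem_iUnion.2 ⟨k, ?_⟩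
        simp only [Set.mem_ofPred_eq]
        linarith
      obtain ⟨k, hk⟩ := hU
      refine ⟨1 / ((k : ℝ) + 1), by positivity, fun l hl hlk => ?_⟩
      have hne : F {u : EuclideanSpace ℝ (Fin n) | 1 + ⟪l⁻¹ • π, u⟫ < 0} ≠ 0 := by
        intro h0
        apply hk
        refine measure_mono_null (fun u hu => ?_) h0
        simp only [Set.mem_ofPred_eq, real_inner_smul_left] at hu ⊢
        have h1 : ⟪π, u⟫ < -l := by linarith
        have h2 := mul_lt_mul_of_pos_left h1 (inv_pos.2 hl)
        rw [mul_neg, inv_mul_cancel₀ hl.ne'] at h2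
        linarith
      exact ⟨hne, by unfold psi; rw [if_neg hne]⟩
    refine ⟨hex, ?_⟩
    obtain ⟨l₀, hl₀, H⟩ := hex
    refine tendsto_const_nhds.congr' ?_
    filter_upwards [Ioc_mem_nhdsGT hl₀] with l hl
    rw [(H l hl.1 hl.2).2, EReal.coe_mul_top_of_pos hl.1]
end

section
/- Let π ∈ ℝⁿ. (a) If F(Λ⁺(π)) = 0, then −λ⁻¹π ∈ C₀ for every λ > 0, and: if cπ = 0 then λ·ψ(−π/λ) converges, as λ → 0⁺, to ⟨π,b⟩ − ∫_{|u|≤1} ⟨π,u⟩ F(du) (this value is well defined in (−∞,+∞], since ⟨π,u⟩ ≤ 0 for F-a.e. u); if cπ ≠ 0 then λ·ψ(−π/λ) → +∞ as λ → 0⁺. (b) If F(Λ⁺(π)) > 0, then there exists λ₀ > 0 such that −π/λ ∉ C₀, hence ψ(−π/λ) = +∞, for all 0 < λ ≤ λ₀; in particular λ·ψ(−π/λ) → +∞ as λ → 0⁺. -/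
open MeasureTheory
open scoped RealInnerProductSpace ENNReal Topology

lemma aux_upper {p y : ℝ} (hp0 : 0 < p) (hp1 : p < 1) (hy : 0 ≤ y) :
    p⁻¹ * (max (1 + y) 0) ^ p - p⁻¹ ≤ y := by
  rw [max_eq_left (by linarith)]
  have := _root_.rpow_one_add_le_one_add_mul_self (s := y) (by linarith) hp0.le hp1.le
  have h2 := mul_le_mul_of_nonneg_left this (inv_nonneg.2 hp0.le)
  have : p⁻¹ * (1 + p * y) = p⁻¹ + y := by field_simp
  linarith

lemma aux_lower {p y : ℝ} (hp0 : 0 < p) (hp1 : p < 1) (hy : 0 ≤ y) :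
    y - y ^ 2 ≤ p⁻¹ * (max (1 + y) 0) ^ p - p⁻¹ := by
  rw [max_eq_left (by linarith)]
  have h1 := _root_.rpow_one_add_le_one_add_mul_self (s := y) (by linarith)
    (p := 1 - p) (by linarith) (by linarith)
  have h3 : (1 + y) ^ (1 - p) * (1 + y) ^ p = 1 + y := by
    rw [← Real.rpow_add (by linarith)]; simp
  have h4 : 0 < (1 + y) ^ p := Real.rpow_pos_of_pos (by linarith) _
  have h5 : 1 + y ≤ (1 + (1 - p) * y) * (1 + y) ^ p := by
    nlinarith
  have h7 : 0 < 1 + (1 - p) * y := by nlinarith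
  have h6 : 1 + p * (y - y ^ 2) ≤ (1 + y) ^ p := by
    by_contra h
    push Not at h
    have h8 := mul_lt_mul_of_pos_left h h7
    have : 0 ≤ p * p * y ^ 2 := by positivity
    have : 0 ≤ p * (1 - p) * y ^ 3 := mul_nonneg (mul_nonneg hp0.le (by linarith)) (by positivity)
    nlinarith
  have h2 := mul_le_mul_of_nonneg_left h6 (inv_nonneg.2 hp0.le)
  have : p⁻¹ * (1 + p * (y - y ^ 2)) = p⁻¹ + (y - y ^ 2) := by field_simp
  linarith

lemma aux_nonneg {p y : ℝ} (hp0 : 0 < p) (hy : 0 ≤ y) :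
    0 ≤ p⁻¹ * (max (1 + y) 0) ^ p - p⁻¹ := by
  rw [max_eq_left (by linarith)]
  have := Real.one_le_rpow (x := 1 + y) (by linarith) hp0.le
  have h2 := mul_le_mul_of_nonneg_left this (inv_nonneg.2 hp0.le)
  linarith

lemma aux_pow {p y : ℝ} (hp0 : 0 < p) (hp1 : p < 1) (hy : 0 ≤ y) :
    p⁻¹ * (max (1 + y) 0) ^ p - p⁻¹ ≤ p⁻¹ * y ^ p := by
  rw [max_eq_left (by linarith)]
  have := Real.rpow_add_le_add_rpow (p := p) (a := 1) (b := y) (by linarith) hy hp0.le hp1.le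
  have h2 := mul_le_mul_of_nonneg_left this (inv_nonneg.2 hp0.le)
  simp at h2
  linarith

noncomputable def HH (p l x : ℝ) : ℝ := l * (p⁻¹ * (max (1 + l⁻¹ * x) 0) ^ p - p⁻¹)

lemma HH_meas (p l : ℝ) : Measurable (HH p l) := by
  unfold HH; fun_prop

lemma HH_nonneg {p l x : ℝ} (hp0 : 0 < p) (hl : 0 < l) (hx : 0 ≤ x) : 0 ≤ HH p l x :=
  mul_nonneg hl.le (aux_nonneg hp0 (by positivity))

lemma HH_le {p l x : ℝ} (hp0 : 0 < p) (hp1 : p < 1) (hl : 0 < l) (hx : 0 ≤ x) :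
    HH p l x ≤ x := by
  have := mul_le_mul_of_nonneg_left (aux_upper (y := l⁻¹ * x) hp0 hp1 (by positivity)) hl.le
  rwa [mul_inv_cancel_left₀ hl.ne'] at this

lemma HH_lower {p l x : ℝ} (hp0 : 0 < p) (hp1 : p < 1) (hl : 0 < l) (hx : 0 ≤ x) :
    x - HH p l x ≤ l⁻¹ * x ^ 2 := by
  have := mul_le_mul_of_nonneg_left (aux_lower (y := l⁻¹ * x) hp0 hp1 (by positivity)) hl.le
  have h2 : l * (l⁻¹ * x - (l⁻¹ * x) ^ 2) = x - l⁻¹ * x ^ 2 := by field_simp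
  rw [h2] at this
  unfold HH
  linarith

lemma HH_pow {p l x : ℝ} (hp0 : 0 < p) (hp1 : p < 1) (hl : 0 < l) (hx : 0 ≤ x) :
    HH p l x ≤ l ^ (1 - p) * (p⁻¹ * x ^ p) := by
  have := mul_le_mul_of_nonneg_left (aux_pow (y := l⁻¹ * x) hp0 hp1 (by positivity)) hl.le
  refine this.trans (le_of_eq ?_)
  rw [Real.mul_rpow (by positivity) hx, Real.rpow_sub hl, Real.rpow_one, Real.inv_rpow hl.le]
  ring

lemma rpow_tendsto {p : ℝ} (hp1 : p < 1) :
    Filter.Tendsto (fun l : ℝ => l ^ (1 - p)) (𝓝[>] (0 : ℝ)) (𝓝 0) := by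
  have h : ContinuousAt (fun l : ℝ => l ^ (1 - p)) 0 :=
    Real.continuousAt_rpow_const _ _ (Or.inr (by linarith))
  have h2 := h.tendsto
  simp only [Real.zero_rpow (by linarith : (1 - p) ≠ 0)] at h2
  exact h2.mono_left nhdsWithin_le_nhds

lemma HH_tendsto {p x : ℝ} (hp0 : 0 < p) (hp1 : p < 1) (hx : 0 ≤ x) :
    Filter.Tendsto (fun l => HH p l x) (𝓝[>] (0 : ℝ)) (𝓝 0) := by
  have h := (rpow_tendsto hp1).mul_const (p⁻¹ * x ^ p)
  rw [zero_mul] at h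
  refine tendsto_of_tendsto_of_tendsto_of_le_of_le' tendsto_const_nhds h ?_ ?_
  · filter_upwards [self_mem_nhdsWithin] with l hl using HH_nonneg hp0 hl hx
  · filter_upwards [self_mem_nhdsWithin] with l hl using HH_pow hp0 hp1 hl hx

lemma A_tendsto {α : Type*} [MeasurableSpace α] (μ : Measure α) {p : ℝ} (hp0 : 0 < p)
    (hp1 : p < 1) (X : α → ℝ) (hX : Measurable X) (hpos : ∀ᵐ u ∂μ, 0 ≤ X u) :
    Filter.Tendsto (fun l => ∫⁻ u, ENNReal.ofReal (X u - HH p l (X u)) ∂μ) (𝓝[>] (0 : ℝ))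
      (𝓝 (∫⁻ u, ENNReal.ofReal (X u) ∂μ)) := by
  refine tendsto_of_le_liminf_of_limsup_le ?_ ?_
  · refine le_trans (le_of_eq ?_) (lintegral_liminf_le (fun l => ?_))
    · apply lintegral_congr_ae
      filter_upwards [hpos] with u hu
      have h := ((HH_tendsto hp0 hp1 hu).const_sub (X u))
      rw [sub_zero] at h
      exact (ENNReal.tendsto_ofReal h).liminf_eq.symm
    · have := (HH_meas p l).comp hX
      exact (hX.sub this).ennreal_ofReal
  · refine Filter.limsup_le_of_le ⟨0, by simp⟩ ?_
    filter_upwards [self_mem_nhdsWithin] with l hl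
    apply lintegral_mono_ae
    filter_upwards [hpos] with u hu
    exact ENNReal.ofReal_le_ofReal (by linarith [HH_nonneg hp0 hl hu])

lemma key (n : ℕ) (p : ℝ) (hp0 : 0 < p) (hp1 : p < 1)
    (F : Measure (EuclideanSpace ℝ (Fin n)))
    (hFlevy : ∫⁻ u, ENNReal.ofReal (min (‖u‖ ^ (2 : ℕ)) 1) ∂F ≠ ⊤)
    (hAF : ∫⁻ u in {u : EuclideanSpace ℝ (Fin n) | 1 < ‖u‖}, ENNReal.ofReal (‖u‖ ^ p) ∂F ≠ ⊤)
    (b : EuclideanSpace ℝ (Fin n))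
    (c : EuclideanSpace ℝ (Fin n) →ₗ[ℝ] EuclideanSpace ℝ (Fin n))
    (π : EuclideanSpace ℝ (Fin n))
    (hpos : ∀ᵐ u ∂F, 0 ≤ -⟪π, u⟫) 
    (hC : ∀ l : ℝ, 0 < l →
        F {u : EuclideanSpace ℝ (Fin n) | 1 + ⟪-(l⁻¹ • π), u⟫ < 0} = 0) :
    ∃ B : ℝ → ℝ, Filter.Tendsto B (𝓝[>] (0 : ℝ)) (𝓝 0) ∧ ∀ l : ℝ, 0 < l →
      (l : EReal) * psi n p F b c (-(l⁻¹ • π)) =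
        ((⟪π, b⟫ + (1 - p) / 2 * ⟪π, c π⟫ * l⁻¹ - B l : ℝ) : EReal) +
        ((∫⁻ u in {u : EuclideanSpace ℝ (Fin n) | ‖u‖ ≤ 1},
          ENNReal.ofReal (-⟪π, u⟫ - HH p l (-⟪π, u⟫)) ∂F : ℝ≥0∞) : EReal) := by
  set X : EuclideanSpace ℝ (Fin n) → ℝ := fun u => -⟪π, u⟫ with hXdef
  have hX : Measurable X := by fun_prop
  set D : Set (EuclideanSpace ℝ (Fin n)) := {u | ‖u‖ ≤ 1} with hD
  have hDm : MeasurableSet D := measurableSet_le measurable_norm measurable_const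
  have hDc : {u : EuclideanSpace ℝ (Fin n) | 1 < ‖u‖} = Dᶜ := by
    ext u; simp [hD]
  rw [hDc] at hAF
  have hXle : ∀ u, X u ≤ ‖π‖ * ‖u‖ := fun u =>
    (neg_le_abs _).trans (abs_real_inner_le_norm π u)
  have hpos' : ∀ᵐ u ∂F, 0 ≤ X u := hpos
  have hposD : ∀ᵐ u ∂(F.restrict D), 0 ≤ X u := ae_restrict_of_ae hpos'
  have hposDc : ∀ᵐ u ∂(F.restrict Dᶜ), 0 ≤ X u := ae_restrict_of_ae hpos'
  have hHm : ∀ l, Measurable (fun u => HH p l (X u)) := fun l => (HH_meas p l).comp hX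
  -- integrability
  have i1 : Integrable (fun u : EuclideanSpace ℝ (Fin n) => min (‖u‖ ^ (2 : ℕ)) 1) F := by
    refine ⟨by fun_prop, ?_⟩
    rw [hasFiniteIntegral_iff_ofReal (Filter.Eventually.of_forall fun u => by positivity)]
    exact lt_top_iff_ne_top.2 hFlevy
  have i2 : Integrable (fun u : EuclideanSpace ℝ (Fin n) => ‖u‖ ^ p) (F.restrict Dᶜ) := by
    refine ⟨(by fun_prop : Measurable fun u : EuclideanSpace ℝ (Fin n) => ‖u‖ ^ p).aestronglyMeasurable, ?_⟩
    rw [hasFiniteIntegral_iff_ofReal (Filter.Eventually.of_forall fun u => by positivity)]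
    exact lt_top_iff_ne_top.2 hAF
  have iXp : Integrable (fun u => p⁻¹ * X u ^ p) (F.restrict Dᶜ) := by
    refine ((i2.const_mul (p⁻¹ * ‖π‖ ^ p))).mono'
      (measurable_const.mul (hX.pow_const p)).aestronglyMeasurable ?_
    filter_upwards [hposDc] with u hu
    rw [Real.norm_of_nonneg (by positivity), mul_assoc, ← Real.mul_rpow (by positivity) (by positivity)]
    gcongr
    exact hXle u
  have iG : ∀ l, 0 < l → Integrable (fun u => X u - HH p l (X u)) (F.restrict D) := by
    intro l hl
    refine ((i1.restrict (s := D)).const_mul (l⁻¹ * ‖π‖ ^ 2)).mono'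
      (hX.sub (hHm l)).aestronglyMeasurable ?_
    filter_upwards [hposD, ae_restrict_mem hDm] with u hu huD
    rw [Real.norm_of_nonneg (sub_nonneg.2 (HH_le hp0 hp1 hl hu))]
    refine (HH_lower hp0 hp1 hl hu).trans ?_
    have : ‖u‖ ^ 2 ≤ 1 := pow_le_one₀ (norm_nonneg u) huD
    rw [min_eq_left this, mul_assoc, ← mul_pow]
    gcongr
    exact hXle u
  have iH : ∀ l, 0 < l → Integrable (fun u => HH p l (X u)) (F.restrict Dᶜ) := by
    intro l hl
    refine (iXp.const_mul (l ^ (1 - p))).mono' (hHm l).aestronglyMeasurable ?_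
    filter_upwards [hposDc] with u hu
    rw [Real.norm_of_nonneg (HH_nonneg hp0 hl hu)]
    exact HH_pow hp0 hp1 hl hu
  refine ⟨fun l => ∫ u in Dᶜ, HH p l (X u) ∂F, ?_, ?_⟩
  · have h := (rpow_tendsto hp1).mul_const (∫ u in Dᶜ, p⁻¹ * X u ^ p ∂F)
    rw [zero_mul] at h
    refine tendsto_of_tendsto_of_tendsto_of_le_of_le' tendsto_const_nhds h ?_ ?_
    · filter_upwards [self_mem_nhdsWithin] with l hl
      apply integral_nonneg_of_ae
      filter_upwards [hposDc] with u hu using HH_nonneg hp0 hl hu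
    · filter_upwards [self_mem_nhdsWithin] with l hl
      rw [← integral_const_mul]
      apply integral_mono_ae (iH l hl) (iXp.const_mul _)
      filter_upwards [hposDc] with u hu using HH_pow hp0 hp1 hl hu
  · intro l hl
    have hA := ofReal_integral_eq_lintegral_ofReal (iG l hl) (by
      filter_upwards [hposD] with u hu using sub_nonneg.2 (HH_le hp0 hp1 hl hu))
    have hA0 : 0 ≤ ∫ u in D, (X u - HH p l (X u)) ∂F := by
      apply integral_nonneg_of_ae
      filter_upwards [hposD] with u hu using sub_nonneg.2 (HH_le hp0 hp1 hl hu)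
    change _ = _ + ((∫⁻ u in D, ENNReal.ofReal (X u - HH p l (X u)) ∂F : ℝ≥0∞) : EReal)
    rw [← hA, EReal.coe_ennreal_ofReal, max_eq_left hA0, ← EReal.coe_add]
    unfold psi
    rw [if_pos (hC l hl), ← EReal.coe_mul]
    congr 1
    have hin : ∀ u, ⟪-(l⁻¹ • π), u⟫ = l⁻¹ * X u := by
      intro u; simp [hXdef, inner_smul_left]
    have hh : ∀ u, l * (p⁻¹ * (max (1 + ⟪-(l⁻¹ • π), u⟫) 0) ^ p - p⁻¹ -
        Set.indicator D (fun u => ⟪-(l⁻¹ • π), u⟫) u) =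
        HH p l (X u) - D.indicator X u := by
      intro u
      rw [hin, mul_sub]
      unfold HH
      congr 1
      by_cases hu : u ∈ D
      · simp only [Set.indicator_of_mem hu, hin]
        field_simp
      · simp [Set.indicator_of_notMem hu]
    have e1 : ∀ u ∈ D, HH p l (X u) - D.indicator X u = -(X u - HH p l (X u)) := by
      intro u hu; rw [Set.indicator_of_mem hu]; ring
    have e2 : ∀ u ∈ Dᶜ, HH p l (X u) - D.indicator X u = HH p l (X u) := by
      intro u hu; rw [Set.indicator_of_notMem hu]; ring
    have j1 : IntegrableOn (fun u => HH p l (X u) - D.indicator X u) D F :=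
      IntegrableOn.congr_fun (iG l hl).neg (fun u hu => (e1 u hu).symm) hDm
    have j2 : IntegrableOn (fun u => HH p l (X u) - D.indicator X u) Dᶜ F :=
      IntegrableOn.congr_fun (iH l hl) (fun u hu => (e2 u hu).symm) hDm.compl
    have j : Integrable (fun u => HH p l (X u) - D.indicator X u) F := by
      have := j1.union j2
      rwa [Set.union_compl_self, integrableOn_univ] at this
    have hI : l * ∫ u, (p⁻¹ * (max (1 + ⟪-(l⁻¹ • π), u⟫) 0) ^ p - p⁻¹ -
        Set.indicator D (fun u => ⟪-(l⁻¹ • π), u⟫) u) ∂F =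
        -(∫ u in D, (X u - HH p l (X u)) ∂F) + ∫ u in Dᶜ, HH p l (X u) ∂F := by
      rw [← integral_const_mul]
      simp_rw [hh]
      rw [← integral_add_compl hDm j, setIntegral_congr_fun hDm e1,
        setIntegral_congr_fun hDm.compl e2, integral_neg]
    rw [mul_sub, hI]
    have hq : ⟪-(l⁻¹ • π), c (-(l⁻¹ • π))⟫ = l⁻¹ * l⁻¹ * ⟪π, c π⟫ := by
      simp [inner_smul_left, inner_smul_right]; ring
    rw [hq, hin b]
    simp only [hXdef]
    field_simp
    ring

lemma psd_pos {E : Type*} [NormedAddCommGroup E] [InnerProductSpace ℝ E] (c : E →ₗ[ℝ] E)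
    (hcsymm : ∀ x y : E, ⟪c x, y⟫ = ⟪x, c y⟫) (hcpsd : ∀ x : E, 0 ≤ ⟪x, c x⟫)
    (x : E) (hx : c x ≠ 0) : 0 < ⟪x, c x⟫ := by
  refine lt_of_le_of_ne (hcpsd x) fun h0 => ?_
  have hs : 0 < ⟪c x, c x⟫ := real_inner_self_pos.2 hx
  have hr := hcpsd (c x)
  set s := ⟪c x, c x⟫ with hsd
  set r := ⟪c x, c (c x)⟫ with hrd
  have h := hcpsd (x + (-(s / (r + 1))) • c x)
  have e : ⟪x + (-(s / (r + 1))) • c x, c (x + (-(s / (r + 1))) • c x)⟫ =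
      -2 * (s / (r + 1)) * s + (s / (r + 1)) ^ 2 * r := by
    simp only [map_add, map_smul, inner_add_left, inner_add_right, inner_smul_left,
      inner_smul_right, ← h0, ← hcsymm x (c x), ← hsd, ← hrd]
    simp
    ring
  rw [e] at h
  have h1 : 0 < r + 1 := by linarith
  have e2 : -2 * (s / (r + 1)) * s + (s / (r + 1)) ^ 2 * r =
      -(s ^ 2 * (r + 2)) / (r + 1) ^ 2 := by field_simp; ring
  rw [e2] at h
  have : -(s ^ 2 * (r + 2)) / (r + 1) ^ 2 < 0 :=
    div_neg_of_neg_of_pos (neg_neg_of_pos (by positivity)) (by positivity)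
  linarith

/-- Recession-function computation of `ψ` along `−π`.
(a) If `F(Λ⁺(π)) = 0` then `−λ⁻¹π ∈ C₀` for all `λ > 0`; if moreover `cπ = 0` then
`λ·ψ(−π/λ) → ⟨π,b⟩ − ∫_{|u|≤1} ⟨π,u⟩ dF` (a value in `(−∞,+∞]`, written here as
`⟨π,b⟩ + ∫_{|u|≤1} (−⟨π,u⟩) dF` with a nonnegative integrand a.e.) as `λ → 0⁺`, while if
`cπ ≠ 0` then `λ·ψ(−π/λ) → +∞`.
(b) If `F(Λ⁺(π)) > 0` then `−π/λ ∉ C₀` (hence `ψ(−π/λ) = +∞`) for all small `λ > 0`, and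
`λ·ψ(−π/λ) → +∞` as `λ → 0⁺`. -/
theorem psi_recession_along_neg_pi
    (n : ℕ) (hn : 1 ≤ n) (p : ℝ) (hp0 : 0 < p) (hp1 : p < 1)
    (F : Measure (EuclideanSpace ℝ (Fin n)))
    (hF0 : F {(0 : EuclideanSpace ℝ (Fin n))} = 0)
    (hFlevy : ∫⁻ u, ENNReal.ofReal (min (‖u‖ ^ (2 : ℕ)) 1) ∂F ≠ ⊤)
    (hAF : ∫⁻ u in {u : EuclideanSpace ℝ (Fin n) | 1 < ‖u‖}, ENNReal.ofReal (‖u‖ ^ p) ∂F ≠ ⊤)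
    (b : EuclideanSpace ℝ (Fin n))
    (c : EuclideanSpace ℝ (Fin n) →ₗ[ℝ] EuclideanSpace ℝ (Fin n))
    (hcsymm : ∀ x y : EuclideanSpace ℝ (Fin n), ⟪c x, y⟫ = ⟪x, c y⟫)
    (hcpsd : ∀ x : EuclideanSpace ℝ (Fin n), 0 ≤ ⟪x, c x⟫)
    (π : EuclideanSpace ℝ (Fin n)) :
    -- (a)
    (F {u : EuclideanSpace ℝ (Fin n) | 0 < ⟪π, u⟫} = 0 →
      (∀ l : ℝ, 0 < l →
        F {u : EuclideanSpace ℝ (Fin n) | 1 + ⟪-(l⁻¹ • π), u⟫ < 0} = 0) ∧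
      (c π = 0 →
        Filter.Tendsto (fun l : ℝ => (l : EReal) * psi n p F b c (-(l⁻¹ • π)))
          (𝓝[>] (0 : ℝ))
          (𝓝 (((⟪π, b⟫ : ℝ) : EReal) +
            ((∫⁻ u in {u : EuclideanSpace ℝ (Fin n) | ‖u‖ ≤ 1},
                ENNReal.ofReal (-⟪π, u⟫) ∂F : ℝ≥0∞) : EReal)))) ∧
      (c π ≠ 0 →
        Filter.Tendsto (fun l : ℝ => (l : EReal) * psi n p F b c (-(l⁻¹ • π)))
          (𝓝[>] (0 : ℝ)) (𝓝 (⊤ : EReal)))) ∧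
    -- (b)
    (F {u : EuclideanSpace ℝ (Fin n) | 0 < ⟪π, u⟫} ≠ 0 →
      (∃ l₀ : ℝ, 0 < l₀ ∧ ∀ l : ℝ, 0 < l → l ≤ l₀ →
        F {u : EuclideanSpace ℝ (Fin n) | 1 + ⟪-(l⁻¹ • π), u⟫ < 0} ≠ 0 ∧
        psi n p F b c (-(l⁻¹ • π)) = ⊤) ∧
      Filter.Tendsto (fun l : ℝ => (l : EReal) * psi n p F b c (-(l⁻¹ • π)))
        (𝓝[>] (0 : ℝ)) (𝓝 (⊤ : EReal))) := by
  constructor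
  · intro h
    have hpos : ∀ᵐ u ∂F, 0 ≤ -⟪π, u⟫ := by
      rw [ae_iff]
      simpa using h
    have hC : ∀ l : ℝ, 0 < l →
        F {u : EuclideanSpace ℝ (Fin n) | 1 + ⟪-(l⁻¹ • π), u⟫ < 0} = 0 := by
      intro l hl
      refine measure_mono_null (fun u hu => ?_) h
      simp only [Set.mem_ofPred_eq, inner_neg_left, inner_smul_left] at hu ⊢
      simp at hu
      by_contra hn
      push Not at hn
      have := mul_nonpos_of_nonneg_of_nonpos (inv_nonneg.2 hl.le) hn
      linarith
    obtain ⟨B, hB, hk⟩ := key n p hp0 hp1 F hFlevy hAF b c π hpos hC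
    refine ⟨hC, fun hc => ?_, fun hc => ?_⟩
    · have hev : (fun l : ℝ => (l : EReal) * psi n p F b c (-(l⁻¹ • π))) =ᶠ[𝓝[>] (0 : ℝ)] _ :=
        Filter.mem_of_superset self_mem_nhdsWithin (fun l hl => hk l hl)
      refine Filter.Tendsto.congr' hev.symm ?_
      have hA := A_tendsto (F.restrict {u : EuclideanSpace ℝ (Fin n) | ‖u‖ ≤ 1}) hp0 hp1
        (fun u => -⟪π, u⟫) (by fun_prop) (ae_restrict_of_ae hpos)
      have hA' := (continuous_coe_ennreal_ereal.tendsto _).comp hA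
      have hB' : Filter.Tendsto (fun l => ((⟪π, b⟫ + (1 - p) / 2 * ⟪π, c π⟫ * l⁻¹ - B l : ℝ) : EReal))
          (𝓝[>] (0 : ℝ)) (𝓝 ((⟪π, b⟫ : ℝ) : EReal)) := by
        refine (continuous_coe_real_ereal.tendsto _).comp ?_
        simpa [hc] using hB.const_sub ⟪π, b⟫
      have hadd := EReal.continuousAt_add (p := (((⟪π, b⟫ : ℝ) : EReal),
            ((∫⁻ u in {u : EuclideanSpace ℝ (Fin n) | ‖u‖ ≤ 1},
                ENNReal.ofReal (-⟪π, u⟫) ∂F : ℝ≥0∞) : EReal)))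
          (Or.inl (EReal.coe_ne_top _)) (Or.inl (EReal.coe_ne_bot _))
      exact hadd.tendsto.comp (hB'.prodMk_nhds hA')
    · have hq := psd_pos c hcsymm hcpsd π hc
      have hreal : Filter.Tendsto (fun l => ⟪π, b⟫ + (1 - p) / 2 * ⟪π, c π⟫ * l⁻¹ - B l)
          (𝓝[>] (0 : ℝ)) Filter.atTop := by
        have h1 : Filter.Tendsto (fun l : ℝ => (1 - p) / 2 * ⟪π, c π⟫ * l⁻¹)
            (𝓝[>] (0 : ℝ)) Filter.atTop :=
          tendsto_inv_nhdsGT_zero.const_mul_atTop (mul_pos (by linarith) hq)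
        have h2 := h1.atTop_add (hB.const_sub ⟪π, b⟫)
        refine h2.congr fun l => by ring
      have hE := EReal.tendsto_coe_nhds_top_iff.2 hreal
      refine tendsto_of_tendsto_of_tendsto_of_le_of_le' hE tendsto_const_nhds ?_
        (Filter.Eventually.of_forall fun _ => le_top)
      filter_upwards [self_mem_nhdsWithin] with l hl
      rw [hk l hl]
      exact le_add_of_nonneg_right (EReal.coe_ennreal_nonneg _)
  · intro h
    have hex : ∃ l₀ : ℝ, 0 < l₀ ∧ ∀ l : ℝ, 0 < l → l ≤ l₀ →
        F {u : EuclideanSpace ℝ (Fin n) | 1 + ⟪-(l⁻¹ • π), u⟫ < 0} ≠ 0 ∧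
        psi n p F b c (-(l⁻¹ • π)) = ⊤ := by
      have : ∃ k : ℕ, F {u : EuclideanSpace ℝ (Fin n) | 1 / ((k : ℝ) + 1) < ⟪π, u⟫} ≠ 0 := by
        by_contra hcon
        push Not at hcon
        refine h (measure_mono_null (fun u hu => ?_) (measure_iUnion_null hcon))
        obtain ⟨k, hk⟩ := exists_nat_one_div_lt (show (0 : ℝ) < ⟪π, u⟫ from hu)
        exact Set.mem_iUnion.2 ⟨k, hk⟩
      obtain ⟨k, hk⟩ := this
      refine ⟨1 / ((k : ℝ) + 1), by positivity, fun l hl hle => ?_⟩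
      have hne : F {u : EuclideanSpace ℝ (Fin n) | 1 + ⟪-(l⁻¹ • π), u⟫ < 0} ≠ 0 := by
        intro h0
        refine hk (measure_mono_null (fun u hu => ?_) h0)
        have hu' : l < ⟪π, u⟫ := lt_of_le_of_lt hle hu
        have h2 := mul_lt_mul_of_pos_left hu' (inv_pos.2 hl)
        rw [inv_mul_cancel₀ hl.ne'] at h2
        simp only [Set.mem_ofPred_eq, inner_neg_left, inner_smul_left]
        simp
        linarith
      exact ⟨hne, by unfold psi; rw [if_neg hne]⟩
    refine ⟨hex, ?_⟩
    obtain ⟨l₀, hl₀, hl⟩ := hex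
    refine tendsto_const_nhds.congr' ?_
    filter_upwards [Ioc_mem_nhdsGT hl₀] with l hm
    rw [(hl l hm.1 hm.2).2, EReal.mul_top_of_pos (by exact_mod_cast hm.1)]
end

section
/- The recession cone of ψ satisfies {π ∈ ℝⁿ : ψ0⁺(π) ≤ 0} = {π ∈ ℝⁿ : F(Λ₋(π)) = 0, cπ = 0, and ∫_{|u|≤1} ⟨π,u⟩ F(du) ≤ ⟨π,b⟩} (for π in the right-hand set the integral is well defined in [0,+∞] since ⟨π,u⟩ ≥ 0 for F-a.e. u). -/
open MeasureTheory
open scoped RealInnerProductSpace ENNReal Topology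

/-- The recession function `ψ0⁺(π) := sup_{λ>0} ψ(λπ)/λ` of `ψ` (using that `ψ(0) = 0`). -/
noncomputable def psiRec (n : ℕ) (p : ℝ) (F : Measure (EuclideanSpace ℝ (Fin n)))
    (b : EuclideanSpace ℝ (Fin n))
    (c : EuclideanSpace ℝ (Fin n) →ₗ[ℝ] EuclideanSpace ℝ (Fin n))
    (π : EuclideanSpace ℝ (Fin n)) : EReal :=
  ⨆ l ∈ Set.Ioi (0 : ℝ), ((l⁻¹ : ℝ) : EReal) * psi n p F b c (l • π)

section helpers

lemma aux_bern {p x : ℝ} (hp0 : 0 < p) (hp1 : p < 1) (hx : -1 ≤ x) :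
    p⁻¹ * (max (1 + x) 0) ^ p - p⁻¹ ≤ x := by
  rw [max_eq_left (by linarith)]
  have h := rpow_one_add_le_one_add_mul_self hx hp0.le hp1.le
  have h2 := mul_le_mul_of_nonneg_left h (inv_pos.2 hp0).le
  have : p⁻¹ * (1 + p * x) = p⁻¹ + x := by field_simp
  linarith

lemma aux_quad {p x : ℝ} (hp0 : 0 < p) (hp1 : p < 1) :
    |p⁻¹ * (max (1 + x) 0) ^ p - p⁻¹ - x| ≤ (p⁻¹ + 1) * x ^ 2 := by
  have hpi : 0 < p⁻¹ := inv_pos.2 hp0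
  rcases lt_or_ge x (-1) with hx | hx
  · rw [max_eq_right (by linarith), Real.zero_rpow hp0.ne', abs_le]
    constructor <;> nlinarith [mul_pos hpi (show 0 < x^2 - 1 by nlinarith)]
  · have h1 := aux_bern hp0 hp1 hx
    rw [abs_of_nonpos (by linarith), max_eq_left (by linarith)]
    have key : 1 + p * x - (1 - p) * x ^ 2 ≤ (1 + x) ^ p := by
      rcases hx.eq_or_lt with h | h
      · subst h
        have := Real.rpow_nonneg (show (0:ℝ) ≤ 1 + -1 by norm_num) p
        nlinarith
      · have ht : 0 < 1 + x := by linarith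
        have hb := rpow_one_add_le_one_add_mul_self hx (sub_nonneg.2 hp1.le) (by linarith : 1 - p ≤ 1)
        have hm : (1 + x) ^ p * (1 + x) ^ (1 - p) = 1 + x := by
          rw [← Real.rpow_add ht]; simp
        have hd : 0 < 1 + (1 - p) * x := by nlinarith
        have h3 : 1 + x ≤ (1 + x) ^ p * (1 + (1 - p) * x) := by
          calc 1 + x = _ := hm.symm
            _ ≤ _ := mul_le_mul_of_nonneg_left hb (Real.rpow_nonneg ht.le _)
        refine le_of_mul_le_mul_right (le_trans ?_ h3) hd
        have : 0 ≤ (1 - p) ^ 2 * x ^ 2 * (1 + x) := by positivity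
        nlinarith
    have h2 := mul_le_mul_of_nonneg_left key hpi.le
    have e : p⁻¹ * (1 + p * x - (1 - p) * x ^ 2) = p⁻¹ + x - p⁻¹ * x ^ 2 + x ^ 2 := by
      field_simp; ring
    nlinarith [sq_nonneg x]

lemma aux_sub {p x : ℝ} (hp0 : 0 < p) (hp1 : p < 1) :
    (max (1 + x) 0) ^ p ≤ 1 + |x| ^ p := by
  have h1 : max (1 + x) 0 ≤ 1 + |x| :=
    max_le (by linarith [le_abs_self x]) (by positivity)
  calc _ ≤ (1 + |x|) ^ p := Real.rpow_le_rpow (le_max_right _ _) h1 hp0.le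
    _ ≤ 1 ^ p + |x| ^ p := Real.rpow_add_le_add_rpow (by norm_num) (abs_nonneg x) hp0.le hp1.le
    _ = _ := by simp

variable {n : ℕ} {p : ℝ} {F : Measure (EuclideanSpace ℝ (Fin n))}

lemma aux_meas_a (q : EuclideanSpace ℝ (Fin n)) (hp0 : 0 < p) :
    Measurable (fun u : EuclideanSpace ℝ (Fin n) => p⁻¹ * (max (1 + ⟪q, u⟫) 0) ^ p - p⁻¹) := by
  have : Continuous (fun u : EuclideanSpace ℝ (Fin n) => p⁻¹ * (max (1 + ⟪q, u⟫) 0) ^ p - p⁻¹) := by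
    refine Continuous.sub (Continuous.mul continuous_const ?_) continuous_const
    refine Continuous.rpow_const (by fun_prop) (fun _ => Or.inr hp0.le)
  exact this.measurable

lemma aux_mB : MeasurableSet {u : EuclideanSpace ℝ (Fin n) | ‖u‖ ≤ 1} :=
  measurableSet_le measurable_norm measurable_const

lemma aux_compl : {u : EuclideanSpace ℝ (Fin n) | 1 < ‖u‖} =
    {u : EuclideanSpace ℝ (Fin n) | ‖u‖ ≤ 1}ᶜ := by
  ext; simp

lemma aux_intB (hp0 : 0 < p) (hp1 : p < 1)
    (hFlevy : ∫⁻ u, ENNReal.ofReal (min (‖u‖ ^ (2 : ℕ)) 1) ∂F ≠ ⊤)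
    (q : EuclideanSpace ℝ (Fin n)) :
    IntegrableOn (fun u => p⁻¹ * (max (1 + ⟪q, u⟫) 0) ^ p - p⁻¹ - ⟪q, u⟫)
      {u : EuclideanSpace ℝ (Fin n) | ‖u‖ ≤ 1} F := by
  have h0 : Integrable (fun u : EuclideanSpace ℝ (Fin n) => min (‖u‖ ^ (2 : ℕ)) 1) F := by
    refine (lintegral_ofReal_ne_top_iff_integrable ?_ ?_).1 hFlevy
    · exact Continuous.aestronglyMeasurable (by fun_prop)
    · exact Filter.Eventually.of_forall fun u => by positivity
  have h1 : IntegrableOn (fun u : EuclideanSpace ℝ (Fin n) =>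
      ((p⁻¹ + 1) * ‖q‖ ^ 2) * min (‖u‖ ^ (2 : ℕ)) 1)
      {u : EuclideanSpace ℝ (Fin n) | ‖u‖ ≤ 1} F := (h0.const_mul _).integrableOn
  refine Integrable.mono' h1 ?_ ?_
  · exact ((aux_meas_a q hp0).sub (by fun_prop)).aestronglyMeasurable
  · refine (ae_restrict_iff' aux_mB).2 (Filter.Eventually.of_forall fun u hu => ?_)
    have hu' : ‖u‖ ≤ 1 := hu
    rw [Real.norm_eq_abs, min_eq_left (by nlinarith [norm_nonneg u])]
    refine (aux_quad hp0 hp1).trans ?_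
    rw [mul_assoc, ← mul_pow]
    refine mul_le_mul_of_nonneg_left ?_ (by positivity)
    exact sq_le_sq' (by linarith [neg_abs_le (⟪q, u⟫ : ℝ), abs_real_inner_le_norm q u])
      (real_inner_le_norm q u)

lemma aux_int_rpow
    (hAF : ∫⁻ u in {u : EuclideanSpace ℝ (Fin n) | 1 < ‖u‖}, ENNReal.ofReal (‖u‖ ^ p) ∂F ≠ ⊤)
    (hp0 : 0 < p) :
    IntegrableOn (fun u => ‖u‖ ^ p) {u : EuclideanSpace ℝ (Fin n) | ‖u‖ ≤ 1}ᶜ F := by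
  rw [← aux_compl]
  refine (lintegral_ofReal_ne_top_iff_integrable ?_ ?_).1 hAF
  · exact (Continuous.rpow_const continuous_norm (fun _ => Or.inr hp0.le)).aestronglyMeasurable
  · exact Filter.Eventually.of_forall fun u => by positivity

lemma aux_inner_rpow (hp0 : 0 < p) (q u : EuclideanSpace ℝ (Fin n)) :
    |(⟪q, u⟫ : ℝ)| ^ p ≤ ‖q‖ ^ p * ‖u‖ ^ p := by
  rw [← Real.mul_rpow (norm_nonneg _) (norm_nonneg _)]
  exact Real.rpow_le_rpow (abs_nonneg _) (abs_real_inner_le_norm q u) hp0.le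

lemma aux_int_inner (hp0 : 0 < p)
    (hAF : ∫⁻ u in {u : EuclideanSpace ℝ (Fin n) | 1 < ‖u‖}, ENNReal.ofReal (‖u‖ ^ p) ∂F ≠ ⊤)
    (q : EuclideanSpace ℝ (Fin n)) :
    IntegrableOn (fun u => |(⟪q, u⟫ : ℝ)| ^ p) {u : EuclideanSpace ℝ (Fin n) | ‖u‖ ≤ 1}ᶜ F := by
  refine Integrable.mono' ((aux_int_rpow hAF hp0).const_mul (‖q‖ ^ p)) ?_ ?_
  · exact (Continuous.rpow_const (by fun_prop) (fun _ => Or.inr hp0.le)).aestronglyMeasurable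
  · refine Filter.Eventually.of_forall fun u => ?_
    rw [Real.norm_eq_abs, abs_of_nonneg (by positivity)]
    exact aux_inner_rpow hp0 q u

lemma aux_intBc (hp0 : 0 < p) (hp1 : p < 1)
    (hAF : ∫⁻ u in {u : EuclideanSpace ℝ (Fin n) | 1 < ‖u‖}, ENNReal.ofReal (‖u‖ ^ p) ∂F ≠ ⊤)
    (q : EuclideanSpace ℝ (Fin n)) :
    IntegrableOn (fun u => p⁻¹ * (max (1 + ⟪q, u⟫) 0) ^ p - p⁻¹)
      {u : EuclideanSpace ℝ (Fin n) | ‖u‖ ≤ 1}ᶜ F := by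
  refine Integrable.mono' ((aux_int_rpow hAF hp0).const_mul (p⁻¹ * (2 + ‖q‖ ^ p))) ?_ ?_
  · exact (aux_meas_a q hp0).aestronglyMeasurable
  · refine (ae_restrict_iff' aux_mB.compl).2 (Filter.Eventually.of_forall fun u hu => ?_)
    have hu' : 1 < ‖u‖ := by simpa using hu
    have h1 : 1 ≤ ‖u‖ ^ p := Real.one_le_rpow hu'.le hp0.le
    have h2 := aux_sub (x := ⟪q, u⟫) hp0 hp1
    have h3 := aux_inner_rpow hp0 q u
    have h4 : 0 ≤ (max (1 + (⟪q, u⟫ : ℝ)) 0) ^ p := Real.rpow_nonneg (le_max_right _ _) _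
    have e : p⁻¹ * (max (1 + (⟪q, u⟫ : ℝ)) 0) ^ p - p⁻¹ =
      p⁻¹ * ((max (1 + (⟪q, u⟫ : ℝ)) 0) ^ p - 1) := by ring
    rw [Real.norm_eq_abs, e, abs_mul, abs_of_pos (inv_pos.2 hp0), mul_assoc]
    refine mul_le_mul_of_nonneg_left ?_ (inv_pos.2 hp0).le
    rw [abs_le]
    constructor <;> nlinarith

lemma aux_split (hp0 : 0 < p) (hp1 : p < 1)
    (hFlevy : ∫⁻ u, ENNReal.ofReal (min (‖u‖ ^ (2 : ℕ)) 1) ∂F ≠ ⊤)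
    (hAF : ∫⁻ u in {u : EuclideanSpace ℝ (Fin n) | 1 < ‖u‖}, ENNReal.ofReal (‖u‖ ^ p) ∂F ≠ ⊤)
    (q : EuclideanSpace ℝ (Fin n)) :
    ∫ u, (p⁻¹ * (max (1 + ⟪q, u⟫) 0) ^ p - p⁻¹ -
        Set.indicator {u : EuclideanSpace ℝ (Fin n) | ‖u‖ ≤ 1}
          (fun u => ⟪q, u⟫) u) ∂F =
    (∫ u in {u : EuclideanSpace ℝ (Fin n) | ‖u‖ ≤ 1},
      (p⁻¹ * (max (1 + ⟪q, u⟫) 0) ^ p - p⁻¹ - ⟪q, u⟫) ∂F) +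
    ∫ u in {u : EuclideanSpace ℝ (Fin n) | ‖u‖ ≤ 1}ᶜ,
      (p⁻¹ * (max (1 + ⟪q, u⟫) 0) ^ p - p⁻¹) ∂F := by
  have e1 : Set.EqOn (fun u => p⁻¹ * (max (1 + ⟪q, u⟫) 0) ^ p - p⁻¹ - ⟪q, u⟫)
      (fun u => p⁻¹ * (max (1 + ⟪q, u⟫) 0) ^ p - p⁻¹ -
        Set.indicator {u : EuclideanSpace ℝ (Fin n) | ‖u‖ ≤ 1} (fun u => ⟪q, u⟫) u)
      {u : EuclideanSpace ℝ (Fin n) | ‖u‖ ≤ 1} := by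
    intro u hu
    simp only [Set.indicator_of_mem hu]
  have e2 : Set.EqOn (fun u => p⁻¹ * (max (1 + ⟪q, u⟫) 0) ^ p - p⁻¹)
      (fun u => p⁻¹ * (max (1 + ⟪q, u⟫) 0) ^ p - p⁻¹ -
        Set.indicator {u : EuclideanSpace ℝ (Fin n) | ‖u‖ ≤ 1} (fun u => ⟪q, u⟫) u)
      {u : EuclideanSpace ℝ (Fin n) | ‖u‖ ≤ 1}ᶜ := by
    intro u hu
    simp only [Set.indicator_of_notMem hu, sub_zero]
  have i1 := (aux_intB hp0 hp1 hFlevy q).congr_fun e1 aux_mB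
  have i2 := (aux_intBc hp0 hp1 hAF q).congr_fun e2 aux_mB.compl
  have hi := i1.union i2
  rw [Set.union_compl_self, integrableOn_univ] at hi
  rw [← integral_add_compl aux_mB hi, setIntegral_congr_fun aux_mB e1,
    setIntegral_congr_fun aux_mB.compl e2]

end helpers

lemma aux_psi_nonpos (n : ℕ) (p : ℝ) (hp0 : 0 < p) (hp1 : p < 1)
    (F : Measure (EuclideanSpace ℝ (Fin n)))
    (hFlevy : ∫⁻ u, ENNReal.ofReal (min (‖u‖ ^ (2 : ℕ)) 1) ∂F ≠ ⊤)
    (hAF : ∫⁻ u in {u : EuclideanSpace ℝ (Fin n) | 1 < ‖u‖}, ENNReal.ofReal (‖u‖ ^ p) ∂F ≠ ⊤)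
    (b : EuclideanSpace ℝ (Fin n))
    (c : EuclideanSpace ℝ (Fin n) →ₗ[ℝ] EuclideanSpace ℝ (Fin n))
    (q : EuclideanSpace ℝ (Fin n)) :
    psi n p F b c q ≤ 0 ↔ F {u : EuclideanSpace ℝ (Fin n) | 1 + ⟪q, u⟫ < 0} = 0 ∧
      -⟪q, b⟫ + ((1 - p) / 2) * ⟪q, c q⟫ +
      (∫ u in {u : EuclideanSpace ℝ (Fin n) | ‖u‖ ≤ 1},
      (⟪q, u⟫ - (p⁻¹ * (max (1 + ⟪q, u⟫) 0) ^ p - p⁻¹)) ∂F) -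
      (∫ u in {u : EuclideanSpace ℝ (Fin n) | ‖u‖ ≤ 1}ᶜ,
      (p⁻¹ * (max (1 + ⟪q, u⟫) 0) ^ p - p⁻¹) ∂F) ≤ 0 := by
  unfold psi
  rw [aux_split hp0 hp1 hFlevy hAF q]
  have e : (∫ u in {u : EuclideanSpace ℝ (Fin n) | ‖u‖ ≤ 1},
      (⟪q, u⟫ - (p⁻¹ * (max (1 + ⟪q, u⟫) 0) ^ p - p⁻¹)) ∂F) =
      -(∫ u in {u : EuclideanSpace ℝ (Fin n) | ‖u‖ ≤ 1},
      (p⁻¹ * (max (1 + ⟪q, u⟫) 0) ^ p - p⁻¹ - ⟪q, u⟫) ∂F) := by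
    rw [← integral_neg]; congr 1; ext u; ring
  rw [e]
  split_ifs with h
  · rw [EReal.coe_nonpos]
    constructor
    · intro h'; refine ⟨h, ?_⟩; linarith
    · rintro ⟨-, h'⟩; linarith
  · simp [h]

lemma aux_rec (n : ℕ) (p : ℝ) (F : Measure (EuclideanSpace ℝ (Fin n)))
    (b : EuclideanSpace ℝ (Fin n))
    (c : EuclideanSpace ℝ (Fin n) →ₗ[ℝ] EuclideanSpace ℝ (Fin n))
    (q : EuclideanSpace ℝ (Fin n)) :
    psiRec n p F b c q ≤ 0 ↔ ∀ l : ℝ, 0 < l → psi n p F b c (l • q) ≤ 0 := by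
  unfold psiRec
  simp only [iSup_le_iff, Set.mem_Ioi]
  refine forall₂_congr fun l hl => ?_
  have hl' : 0 < l⁻¹ := inv_pos.2 hl
  generalize psi n p F b c (l • q) = y
  induction y with
  | bot => simp [EReal.coe_mul_bot_of_pos hl']
  | top => simp [EReal.coe_mul_top_of_pos hl']
  | coe y =>
    rw [← EReal.coe_mul, EReal.coe_nonpos, EReal.coe_nonpos]
    constructor
    · intro h; by_contra! h'; nlinarith [mul_pos hl' h']
    · intro h; exact mul_nonpos_of_nonneg_of_nonpos hl'.le h

lemma aux_c (n : ℕ) (c : EuclideanSpace ℝ (Fin n) →ₗ[ℝ] EuclideanSpace ℝ (Fin n))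
    (hcsymm : ∀ x y : EuclideanSpace ℝ (Fin n), ⟪c x, y⟫ = ⟪x, c y⟫)
    (hcpsd : ∀ x : EuclideanSpace ℝ (Fin n), 0 ≤ ⟪x, c x⟫)
    (q : EuclideanSpace ℝ (Fin n)) (h : ⟪q, c q⟫ ≤ 0) : c q = 0 := by
  by_contra hne
  have hN : 0 < ⟪c q, c q⟫ := real_inner_self_pos.2 hne
  have key : ∀ t : ℝ, 0 ≤ 2 * t * ⟪c q, c q⟫ + t ^ 2 * ⟪c q, c (c q)⟫ := by
    intro t
    have h1 := hcpsd (q + t • c q)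
    simp only [map_add, map_smul, inner_add_left, inner_add_right, inner_smul_left,
      inner_smul_right, ← hcsymm q (c q)] at h1
    simp only [conj_trivial] at h1
    nlinarith
  set N : ℝ := ⟪c q, c q⟫
  set M : ℝ := ⟪c q, c (c q)⟫
  have hM : 0 ≤ M := hcpsd _
  have h2 := key (-(N / (M + 1)))
  have h3 : 0 < N / (M + 1) := by positivity
  have h4 : N / (M + 1) * (M + 1) = N := by field_simp
  set s := N / (M + 1)
  nlinarith [mul_pos h3 hN, mul_pos h3 h3]

/-- The recession cone of `ψ`:
`{π | ψ0⁺(π) ≤ 0} = {π | F(Λ₋(π)) = 0, cπ = 0, ∫_{|u|≤1} ⟨π,u⟩ dF ≤ ⟨π,b⟩}`,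
the integral on the right being a well-defined element of `[0,+∞]` (the integrand is
`F`-a.e. nonnegative there). -/
theorem psi_recession_cone
    (n : ℕ) (hn : 1 ≤ n) (p : ℝ) (hp0 : 0 < p) (hp1 : p < 1)
    (F : Measure (EuclideanSpace ℝ (Fin n)))
    (hF0 : F {(0 : EuclideanSpace ℝ (Fin n))} = 0)
    (hFlevy : ∫⁻ u, ENNReal.ofReal (min (‖u‖ ^ (2 : ℕ)) 1) ∂F ≠ ⊤)
    (hAF : ∫⁻ u in {u : EuclideanSpace ℝ (Fin n) | 1 < ‖u‖}, ENNReal.ofReal (‖u‖ ^ p) ∂F ≠ ⊤)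
    (b : EuclideanSpace ℝ (Fin n))
    (c : EuclideanSpace ℝ (Fin n) →ₗ[ℝ] EuclideanSpace ℝ (Fin n))
    (hcsymm : ∀ x y : EuclideanSpace ℝ (Fin n), ⟪c x, y⟫ = ⟪x, c y⟫)
    (hcpsd : ∀ x : EuclideanSpace ℝ (Fin n), 0 ≤ ⟪x, c x⟫) :
    {π : EuclideanSpace ℝ (Fin n) | psiRec n p F b c π ≤ 0} =
    {π : EuclideanSpace ℝ (Fin n) |
      F {u : EuclideanSpace ℝ (Fin n) | ⟪π, u⟫ < 0} = 0 ∧ c π = 0 ∧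
      ((∫⁻ u in {u : EuclideanSpace ℝ (Fin n) | ‖u‖ ≤ 1},
          ENNReal.ofReal ⟪π, u⟫ ∂F : ℝ≥0∞) : EReal) ≤ ((⟪π, b⟫ : ℝ) : EReal)} := by
  ext q
  simp only [Set.mem_setOf_eq]
  rw [aux_rec]
  simp only [aux_psi_nonpos n p hp0 hp1 F hFlevy hAF b c]
  constructor
  · intro H
    have hneg : F {u : EuclideanSpace ℝ (Fin n) | ⟪q, u⟫ < 0} = 0 := by
      have hs : {u : EuclideanSpace ℝ (Fin n) | ⟪q, u⟫ < 0} ⊆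
          ⋃ k : ℕ, {u : EuclideanSpace ℝ (Fin n) | 1 + ⟪((k : ℝ) + 1) • q, u⟫ < 0} := by
        intro u hu
        have hu' : (⟪q, u⟫ : ℝ) < 0 := hu
        obtain ⟨k, hk⟩ := exists_nat_gt (1 / (-(⟪q, u⟫ : ℝ)))
        rw [div_lt_iff₀ (by linarith)] at hk
        refine Set.mem_iUnion.2 ⟨k, ?_⟩
        simp only [Set.mem_setOf_eq, real_inner_smul_left]
        nlinarith
      refine measure_mono_null hs (measure_iUnion_null fun k => (H _ (by positivity)).1)
    have hae : ∀ᵐ u ∂F, 0 ≤ (⟪q, u⟫ : ℝ) := by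
      rw [ae_iff]; simpa using hneg
    set K : ℝ := p⁻¹ * ∫ u in {u : EuclideanSpace ℝ (Fin n) | ‖u‖ ≤ 1}ᶜ, |(⟪q, u⟫ : ℝ)| ^ p ∂F
      with hK
    have hJ0 : ∀ l : ℝ, 0 < l → ∀ᵐ u ∂F, 0 ≤ (⟪l • q, u⟫ : ℝ) -
        (p⁻¹ * (max (1 + ⟪l • q, u⟫) 0) ^ p - p⁻¹) := by
      intro l hl
      filter_upwards [hae] with u hu
      rw [real_inner_smul_left]
      have : 0 ≤ l * (⟪q, u⟫ : ℝ) := by positivity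
      linarith [aux_bern hp0 hp1 (show -1 ≤ l * (⟪q, u⟫ : ℝ) by linarith)]
    have main : ∀ l : ℝ, 0 < l → (∫ u in {u : EuclideanSpace ℝ (Fin n) | ‖u‖ ≤ 1},
        (⟪l • q, u⟫ - (p⁻¹ * (max (1 + ⟪l • q, u⟫) 0) ^ p - p⁻¹)) ∂F) +
        ((1 - p) / 2) * (l ^ 2 * ⟪q, c q⟫) ≤ l * ⟪q, b⟫ + l ^ p * K := by
      intro l hl
      have h1 := (H l hl).2
      have h2 : (∫ u in {u : EuclideanSpace ℝ (Fin n) | ‖u‖ ≤ 1}ᶜ,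
          (p⁻¹ * (max (1 + ⟪l • q, u⟫) 0) ^ p - p⁻¹) ∂F) ≤ l ^ p * K := by
        rw [hK, ← integral_const_mul, ← integral_const_mul]
        refine integral_mono (aux_intBc hp0 hp1 hAF _)
          (((aux_int_inner hp0 hAF q).const_mul _).const_mul _) fun u => ?_
        have h3 := mul_le_mul_of_nonneg_left (aux_sub (x := ⟪l • q, u⟫) hp0 hp1) (inv_pos.2 hp0).le
        have h4 : |(⟪l • q, u⟫ : ℝ)| ^ p = l ^ p * |(⟪q, u⟫ : ℝ)| ^ p := by
          rw [real_inner_smul_left, abs_mul, abs_of_pos hl, Real.mul_rpow hl.le (abs_nonneg _)]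
        rw [h4] at h3
        simp only
        linarith
      have e1 : (⟪l • q, c (l • q)⟫ : ℝ) = l ^ 2 * ⟪q, c q⟫ := by
        rw [map_smul, real_inner_smul_left, real_inner_smul_right]; ring
      rw [e1, real_inner_smul_left] at h1
      linarith
    have hJ : ∀ l : ℝ, 0 < l → 0 ≤ (∫ u in {u : EuclideanSpace ℝ (Fin n) | ‖u‖ ≤ 1},
        (⟪l • q, u⟫ - (p⁻¹ * (max (1 + ⟪l • q, u⟫) 0) ^ p - p⁻¹)) ∂F) := fun l hl =>
      integral_nonneg_of_ae (ae_restrict_of_ae (hJ0 l hl))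
    have lim1 : Filter.Tendsto (fun l : ℝ => l ^ (p - 1)) Filter.atTop (𝓝 0) := by
      have := tendsto_rpow_neg_atTop (show 0 < 1 - p by linarith)
      simpa using this
    have hlp : ∀ l : ℝ, 0 < l → l ^ p = l * l ^ (p - 1) := by
      intro l hl
      rw [Real.rpow_sub_one hl.ne']; field_simp
    have hRlim : Filter.Tendsto (fun l : ℝ => ⟪q, b⟫ + l ^ (p - 1) * K) Filter.atTop
        (𝓝 (⟪q, b⟫ : ℝ)) := by
      simpa using (lim1.mul_const K).const_add (⟪q, b⟫ : ℝ)
    have hc : (⟪q, c q⟫ : ℝ) ≤ 0 := by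
      have hl2 : Filter.Tendsto (fun l : ℝ => l⁻¹ * (⟪q, b⟫ + l ^ (p - 1) * K)) Filter.atTop
          (𝓝 0) := by
        simpa using tendsto_inv_atTop_zero.mul hRlim
      have h5 : ((1 - p) / 2) * (⟪q, c q⟫ : ℝ) ≤ 0 := by
        refine ge_of_tendsto hl2 ?_
        filter_upwards [Filter.eventually_gt_atTop 0] with l hl
        have h6 := main l hl
        have h7 := hJ l hl
        rw [hlp l hl] at h6
        rw [← div_eq_inv_mul, le_div_iff₀ hl]
        have h8 : ((1 - p) / 2 * (⟪q, c q⟫ : ℝ) * l) * l ≤ (⟪q, b⟫ + l ^ (p - 1) * K) * l := by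
          linarith
        exact le_of_mul_le_mul_right h8 hl
      have : 0 < (1 - p) / 2 := by linarith
      by_contra! h'
      linarith [mul_pos this h']
    have hcq := aux_c n c hcsymm hcpsd q hc
    have hcq0 : (⟪q, c q⟫ : ℝ) = 0 := by rw [hcq]; simp
    have hJle : ∀ l : ℝ, 0 < l → (∫ u in {u : EuclideanSpace ℝ (Fin n) | ‖u‖ ≤ 1},
        l⁻¹ * (⟪l • q, u⟫ - (p⁻¹ * (max (1 + ⟪l • q, u⟫) 0) ^ p - p⁻¹)) ∂F)
        ≤ ⟪q, b⟫ + l ^ (p - 1) * K := by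
      intro l hl
      rw [integral_const_mul, ← div_eq_inv_mul, div_le_iff₀ hl]
      have h6 := main l hl
      rw [hlp l hl, hcq0] at h6
      linarith
    have hb0 : 0 ≤ (⟪q, b⟫ : ℝ) := by
      refine ge_of_tendsto hRlim ?_
      filter_upwards [Filter.eventually_gt_atTop 0] with l hl
      refine le_trans ?_ (hJle l hl)
      rw [integral_const_mul]
      exact mul_nonneg (inv_pos.2 hl).le (hJ l hl)
    refine ⟨hneg, hcq, ?_⟩
    have fin : (∫⁻ u in {u : EuclideanSpace ℝ (Fin n) | ‖u‖ ≤ 1}, ENNReal.ofReal ⟪q, u⟫ ∂F)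
        ≤ ENNReal.ofReal ⟪q, b⟫ := by
      have hcast : Filter.Tendsto (fun k : ℕ => (k : ℝ) + 1) Filter.atTop Filter.atTop :=
        Filter.tendsto_atTop_add_const_right _ _ tendsto_natCast_atTop_atTop
      have s1 : (∫⁻ u in {u : EuclideanSpace ℝ (Fin n) | ‖u‖ ≤ 1}, ENNReal.ofReal ⟪q, u⟫ ∂F) ≤
          ∫⁻ u in {u : EuclideanSpace ℝ (Fin n) | ‖u‖ ≤ 1},
            Filter.liminf (fun k : ℕ => ENNReal.ofReal (((k : ℝ) + 1)⁻¹ *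
              (⟪((k : ℝ) + 1) • q, u⟫ -
                (p⁻¹ * (max (1 + ⟪((k : ℝ) + 1) • q, u⟫) 0) ^ p - p⁻¹)))) Filter.atTop ∂F := by
        refine lintegral_mono_ae (ae_restrict_of_ae ?_)
        filter_upwards [hae] with u hu
        refine le_of_eq (Filter.Tendsto.liminf_eq ?_).symm
        refine (ENNReal.continuous_ofReal.tendsto _).comp ?_
        set x : ℝ := ⟪q, u⟫
        have hlow : Filter.Tendsto (fun l : ℝ => x - l ^ (p - 1) * (p⁻¹ * x ^ p)) Filter.atTop
            (𝓝 x) := by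
          simpa using (lim1.mul_const (p⁻¹ * x ^ p)).const_sub x
        have hmid : Filter.Tendsto (fun l : ℝ => l⁻¹ * (⟪l • q, u⟫ -
                (p⁻¹ * (max (1 + ⟪l • q, u⟫) 0) ^ p - p⁻¹))) Filter.atTop (𝓝 x) := by
          refine tendsto_of_tendsto_of_tendsto_of_le_of_le' hlow tendsto_const_nhds ?_ ?_
          · filter_upwards [Filter.eventually_gt_atTop 0] with l hl
            rw [real_inner_smul_left, le_inv_mul_iff₀' hl]
            have h3 := mul_le_mul_of_nonneg_left (aux_sub (x := l * x) hp0 hp1) (inv_pos.2 hp0).le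
            rw [abs_of_nonneg (by positivity), Real.mul_rpow hl.le hu, hlp l hl] at h3
            change (x - l ^ (p - 1) * (p⁻¹ * x ^ p)) * l ≤
              l * x - (p⁻¹ * (max (1 + l * x) 0) ^ p - p⁻¹)
            linarith
          · filter_upwards [Filter.eventually_gt_atTop 0] with l hl
            rw [real_inner_smul_left, ← div_eq_inv_mul, div_le_iff₀ hl]
            change l * x - (p⁻¹ * (max (1 + l * x) 0) ^ p - p⁻¹) ≤ x * l
            have hlx : 0 ≤ l * x := by positivity
            have h9 : 1 ≤ (max (1 + l * x) 0) ^ p :=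
              Real.one_le_rpow (le_max_of_le_left (by linarith)) hp0.le
            have h10 := mul_le_mul_of_nonneg_left h9 (inv_pos.2 hp0).le
            linarith
        exact hmid.comp hcast
      refine s1.trans ((lintegral_liminf_le fun k => ?_).trans ?_)
      · have := aux_meas_a (p := p) (((k : ℝ) + 1) • q) hp0
        fun_prop
      · have hlimR : Filter.Tendsto (fun k : ℕ => ENNReal.ofReal
            (⟪q, b⟫ + ((k : ℝ) + 1) ^ (p - 1) * K)) Filter.atTop (𝓝 (ENNReal.ofReal ⟪q, b⟫)) :=
          (ENNReal.continuous_ofReal.tendsto _).comp (hRlim.comp hcast)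
        rw [← hlimR.liminf_eq]
        refine Filter.liminf_le_liminf (Filter.Eventually.of_forall fun k => ?_)
        have hl : (0 : ℝ) < (k : ℝ) + 1 := by positivity
        rw [← ofReal_integral_eq_lintegral_ofReal]
        · exact ENNReal.ofReal_le_ofReal (hJle _ hl)
        · refine Integrable.const_mul ?_ _
          refine (aux_intB hp0 hp1 hFlevy (((k : ℝ) + 1) • q)).neg.congr
            (Filter.Eventually.of_forall fun u => ?_)
          simp only [Pi.neg_apply]; ring
        · refine ae_restrict_of_ae ?_
          filter_upwards [hJ0 _ hl] with u hu
          exact mul_nonneg (inv_pos.2 hl).le hu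
    calc _ ≤ ((ENNReal.ofReal ⟪q, b⟫ : ℝ≥0∞) : EReal) := EReal.coe_ennreal_le_coe_ennreal_iff.2 fin
      _ = _ := by rw [EReal.coe_ennreal_ofReal, max_eq_left hb0]
  · rintro ⟨hneg, hcq, hI⟩ l hl
    have hae : ∀ᵐ u ∂F, 0 ≤ (⟪q, u⟫ : ℝ) := by
      rw [ae_iff]; simpa using hneg
    have hae1 : ∀ᵐ u ∂F, 0 ≤ p⁻¹ * (max (1 + (⟪l • q, u⟫ : ℝ)) 0) ^ p - p⁻¹ := by
      filter_upwards [hae] with u hu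
      have hlx : 0 ≤ l * (⟪q, u⟫ : ℝ) := by positivity
      rw [real_inner_smul_left]
      have h9 : 1 ≤ (max (1 + l * (⟪q, u⟫ : ℝ)) 0) ^ p :=
        Real.one_le_rpow (le_max_of_le_left (by linarith)) hp0.le
      have h10 := mul_le_mul_of_nonneg_left h9 (inv_pos.2 hp0).le
      linarith
    constructor
    · refine measure_mono_null (fun u hu => ?_) hneg
      simp only [Set.mem_setOf_eq, real_inner_smul_left] at hu ⊢
      by_contra! h'
      have := mul_nonneg hl.le h'
      linarith
    · have hfin : (∫⁻ u in {u : EuclideanSpace ℝ (Fin n) | ‖u‖ ≤ 1}, ENNReal.ofReal ⟪q, u⟫ ∂F)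
          ≠ ⊤ := by
        intro h; rw [h] at hI; simp at hI
      have haeB := ae_restrict_of_ae (s := {u : EuclideanSpace ℝ (Fin n) | ‖u‖ ≤ 1}) hae
      have hint : IntegrableOn (fun u => (⟪q, u⟫ : ℝ))
          {u : EuclideanSpace ℝ (Fin n) | ‖u‖ ≤ 1} F :=
        (lintegral_ofReal_ne_top_iff_integrable
          (Continuous.aestronglyMeasurable (by fun_prop)) haeB).1 hfin
      have hle : (∫ u in {u : EuclideanSpace ℝ (Fin n) | ‖u‖ ≤ 1}, (⟪q, u⟫ : ℝ) ∂F) ≤ ⟪q, b⟫ := by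
        rw [← ofReal_integral_eq_lintegral_ofReal hint haeB, EReal.coe_ennreal_ofReal,
          max_eq_left (integral_nonneg_of_ae haeB)] at hI
        exact_mod_cast hI
      have hJ : (∫ u in {u : EuclideanSpace ℝ (Fin n) | ‖u‖ ≤ 1},
          (⟪l • q, u⟫ - (p⁻¹ * (max (1 + ⟪l • q, u⟫) 0) ^ p - p⁻¹)) ∂F) ≤ l * ⟪q, b⟫ := by
        refine le_trans ?_ (mul_le_mul_of_nonneg_left hle hl.le)
        rw [← integral_const_mul]
        refine integral_mono_ae ?_ (hint.const_mul l) (ae_restrict_of_ae ?_)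
        · refine (aux_intB hp0 hp1 hFlevy (l • q)).neg.congr
            (Filter.Eventually.of_forall fun u => ?_)
          simp only [Pi.neg_apply]; ring
        · filter_upwards [hae1] with u hu
          simp only [real_inner_smul_left] at hu ⊢
          linarith
      have hP : 0 ≤ (∫ u in {u : EuclideanSpace ℝ (Fin n) | ‖u‖ ≤ 1}ᶜ,
          (p⁻¹ * (max (1 + ⟪l • q, u⟫) 0) ^ p - p⁻¹) ∂F) :=
        integral_nonneg_of_ae (ae_restrict_of_ae hae1)
      have e1 : (⟪l • q, c (l • q)⟫ : ℝ) = 0 := by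
        rw [map_smul, hcq]; simp
      rw [e1, real_inner_smul_left]
      linarith
end

section
/- The constancy space of ψ equals the null-investment set: {π ∈ ℝⁿ : ψ0⁺(π) ≤ 0 and ψ0⁺(−π) ≤ 0} = N := {π ∈ ℝⁿ : cπ = 0, F({u ∈ ℝⁿ : ⟨π,u⟩ ≠ 0}) = 0, ⟨π,b⟩ = 0}. -/
open MeasureTheory
open scoped RealInnerProductSpace ENNReal Topology

theorem psi_of_null (n : ℕ) (p : ℝ) (F : Measure (EuclideanSpace ℝ (Fin n)))
    (b : EuclideanSpace ℝ (Fin n))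
    (c : EuclideanSpace ℝ (Fin n) →ₗ[ℝ] EuclideanSpace ℝ (Fin n))
    (π : EuclideanSpace ℝ (Fin n))
    (h : F {u : EuclideanSpace ℝ (Fin n) | ⟪π, u⟫ ≠ 0} = 0) :
    psi n p F b c π = ((-⟪π, b⟫ - ((p - 1) / 2) * ⟪π, c π⟫ : ℝ) : EReal) := by
  have h1 : F {u : EuclideanSpace ℝ (Fin n) | 1 + ⟪π, u⟫ < 0} = 0 := by
    refine measure_mono_null ?_ h
    intro u hu h0
    simp only [Set.mem_setOf_eq] at hu
    rw [h0] at hu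
    linarith
  have h2 : ∫ u, (p⁻¹ * (max (1 + ⟪π, u⟫) 0) ^ p - p⁻¹ -
        Set.indicator {u : EuclideanSpace ℝ (Fin n) | ‖u‖ ≤ 1}
          (fun u => ⟪π, u⟫) u) ∂F = 0 := by
    apply integral_eq_zero_of_ae
    have h' : ∀ᵐ u ∂F, ⟪π, u⟫ = 0 := by
      rw [ae_iff]; exact h
    filter_upwards [h'] with u hu
    simp [hu, Set.indicator]
  unfold psi
  rw [if_pos h1, h2, sub_zero]

theorem psi_le_of_rec (n : ℕ) (p : ℝ) (F : Measure (EuclideanSpace ℝ (Fin n)))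
    (b : EuclideanSpace ℝ (Fin n))
    (c : EuclideanSpace ℝ (Fin n) →ₗ[ℝ] EuclideanSpace ℝ (Fin n))
    (π : EuclideanSpace ℝ (Fin n)) (h : psiRec n p F b c π ≤ 0) (l : ℝ) (hl : 0 < l) :
    ((l⁻¹ : ℝ) : EReal) * psi n p F b c (l • π) ≤ 0 :=
  le_trans (le_iSup₂ (f := fun (l : ℝ) (_ : l ∈ Set.Ioi (0 : ℝ)) =>
    ((l⁻¹ : ℝ) : EReal) * psi n p F b c (l • π)) l hl) h

theorem null_of_rec (n : ℕ) (p : ℝ) (F : Measure (EuclideanSpace ℝ (Fin n)))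
    (b : EuclideanSpace ℝ (Fin n))
    (c : EuclideanSpace ℝ (Fin n) →ₗ[ℝ] EuclideanSpace ℝ (Fin n))
    (π : EuclideanSpace ℝ (Fin n)) (h : psiRec n p F b c π ≤ 0) :
    F {u : EuclideanSpace ℝ (Fin n) | ⟪π, u⟫ < 0} = 0 := by
  have key : ∀ k : ℕ, F {u : EuclideanSpace ℝ (Fin n) |
      1 + ⟪((k : ℝ) + 1) • π, u⟫ < 0} = 0 := by
    intro k
    by_contra hk
    have hpos : (0 : ℝ) < (k : ℝ) + 1 := by positivity
    have := psi_le_of_rec n p F b c π h _ hpos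
    unfold psi at this
    rw [if_neg hk, EReal.coe_mul_top_of_pos (inv_pos.mpr hpos)] at this
    simp at this
  refine measure_mono_null ?_ (measure_iUnion_null key)
  intro u hu
  simp only [Set.mem_setOf_eq] at hu
  obtain ⟨k, hk⟩ := exists_nat_gt (1 / (-⟪π, u⟫))
  rw [div_lt_iff₀ (by linarith)] at hk
  refine Set.mem_iUnion.mpr ⟨k, ?_⟩
  simp only [Set.mem_setOf_eq, real_inner_smul_left]
  linarith

/-- The constancy space of `ψ` equals the null-investment set:
`{π | ψ0⁺(π) ≤ 0 ∧ ψ0⁺(−π) ≤ 0} = N := {π | cπ = 0, F {u | ⟨π,u⟩ ≠ 0} = 0, ⟨π,b⟩ = 0}`. -/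
theorem psi_constancy_space_eq_null_investment
    (n : ℕ) (hn : 1 ≤ n) (p : ℝ) (hp0 : 0 < p) (hp1 : p < 1)
    (F : Measure (EuclideanSpace ℝ (Fin n)))
    (hF0 : F {(0 : EuclideanSpace ℝ (Fin n))} = 0)
    (hFlevy : ∫⁻ u, ENNReal.ofReal (min (‖u‖ ^ (2 : ℕ)) 1) ∂F ≠ ⊤)
    (hAF : ∫⁻ u in {u : EuclideanSpace ℝ (Fin n) | 1 < ‖u‖}, ENNReal.ofReal (‖u‖ ^ p) ∂F ≠ ⊤)
    (b : EuclideanSpace ℝ (Fin n))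
    (c : EuclideanSpace ℝ (Fin n) →ₗ[ℝ] EuclideanSpace ℝ (Fin n))
    (hcsymm : ∀ x y : EuclideanSpace ℝ (Fin n), ⟪c x, y⟫ = ⟪x, c y⟫)
    (hcpsd : ∀ x : EuclideanSpace ℝ (Fin n), 0 ≤ ⟪x, c x⟫) :
    {π : EuclideanSpace ℝ (Fin n) |
      psiRec n p F b c π ≤ 0 ∧ psiRec n p F b c (-π) ≤ 0} =
    {π : EuclideanSpace ℝ (Fin n) | c π = 0 ∧
      F {u : EuclideanSpace ℝ (Fin n) | ⟪π, u⟫ ≠ 0} = 0 ∧ ⟪π, b⟫ = 0} := by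
  ext π
  simp only [Set.mem_setOf_eq]
  constructor
  · rintro ⟨h1, h2⟩
    have n1 := null_of_rec n p F b c π h1
    have n2 := null_of_rec n p F b c (-π) h2
    have hN : F {u : EuclideanSpace ℝ (Fin n) | ⟪π, u⟫ ≠ 0} = 0 := by
      refine measure_mono_null ?_ (measure_union_null n1 n2)
      intro u hu
      rcases lt_or_gt_of_ne hu with h | h
      · exact Or.inl h
      · right
        simp only [Set.mem_setOf_eq, inner_neg_left]
        linarith
    have hN' : F {u : EuclideanSpace ℝ (Fin n) | ⟪-π, u⟫ ≠ 0} = 0 := by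
      simpa [inner_neg_left] using hN
    have e1 := psi_le_of_rec n p F b c π h1 1 one_pos
    have e2 := psi_le_of_rec n p F b c (-π) h2 1 one_pos
    rw [one_smul, psi_of_null n p F b c _ hN, inv_one, ← EReal.coe_mul, one_mul] at e1
    rw [one_smul, psi_of_null n p F b c _ hN', inv_one, ← EReal.coe_mul, one_mul] at e2
    have e1' := EReal.coe_nonpos.mp e1
    have e2' := EReal.coe_nonpos.mp e2
    simp only [map_neg, inner_neg_left, inner_neg_right, neg_neg] at e2'
    have hq := hcpsd π
    have hq0 : ⟪π, c π⟫ = 0 := by nlinarith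
    rw [hq0] at e1' e2'
    refine ⟨?_, hN, by linarith⟩
    have hB := hcpsd (c π)
    set B := ⟪c π, c (c π)⟫ with hBdef
    set A := ⟪c π, c π⟫ with hA
    have hA0 : 0 ≤ A := real_inner_self_nonneg
    have hquad : ∀ t : ℝ, 0 ≤ -2 * t * A + t ^ 2 * B := by
      intro t
      have := hcpsd (π - t • c π)
      simp only [map_sub, map_smul, inner_sub_left, inner_sub_right, real_inner_smul_left,
        real_inner_smul_right, hq0, ← hcsymm π (c π)] at this
      rw [← hA, ← hBdef] at this
      linarith
    have hq1 := hquad (A / (B + 1))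
    have hB1 : 0 < B + 1 := by linarith
    have hq2 : -2 * (A / (B + 1)) * A + (A / (B + 1)) ^ 2 * B
        = -(A ^ 2 * (B + 2)) / (B + 1) ^ 2 := by
      field_simp
      ring
    rw [hq2, le_div_iff₀ (by positivity), zero_mul] at hq1
    have hA2 : A = 0 := by
      have : A ^ 2 ≤ 0 := by nlinarith [sq_nonneg A, mul_nonneg (sq_nonneg A) hB]
      nlinarith [sq_nonneg A, pow_eq_zero_iff (two_ne_zero) |>.mp (le_antisymm this (sq_nonneg A))]
    exact inner_self_eq_zero.mp hA2
  · rintro ⟨hc, hN, hb⟩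
    have gen : ∀ l : ℝ, psi n p F b c (l • π) = 0 := by
      intro l
      rw [psi_of_null]
      · simp [real_inner_smul_left, hc, hb]
      · refine measure_mono_null ?_ hN
        intro u hu h0
        apply hu
        rw [real_inner_smul_left, h0, mul_zero]
    constructor
    · exact iSup₂_le fun l _ => by rw [gen, mul_zero]
    · refine iSup₂_le fun l _ => ?_
      rw [smul_neg, ← neg_smul, gen, mul_zero]
end
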